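/- Let 0 < d < n and let Ω ⊂ ℝⁿ be a weak local John domain whose complement ℝⁿ∖Ω is unbounded. Let s > 0, 1 ≤ p < ∞, 1 ≤ β < ∞, and 0 < c < 1. Then C_c^∞(Ω) is dense in W̃^{1,p}_{av,c,β,s}(Ω): for every u ∈ W̃^{1,p}_{av,c,β,s}(Ω) and every ε > 0 there is φ ∈ C_c^∞(Ω) with ‖∇(u−φ)‖_{L^p_{av,c,β,s}(Ω)} + ‖u−φ‖_{L^p_{av,c,β,s+1}(Ω)} < ε. -/

import Mathlib

open MeasureTheory Metric Set Filter
open scoped ENNReal NNReal Topology RealInnerProductSpace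

noncomputable section

namespace Paper

/-- Euclidean space `ℝⁿ`. -/
abbrev Euc (n : ℕ) : Type := EuclideanSpace ℝ (Fin n)

variable {n : ℕ}

/-- `δ(x)`: the distance from `x` to the boundary of `Ω`. -/
def bd (Ω : Set (Euc n)) (x : Euc n) : ℝ := Metric.infDist x (frontier Ω)

/-- `σ`: the `d`-dimensional Hausdorff measure on `ℝⁿ`. -/
def hm (n : ℕ) (d : ℝ) : Measure (Euc n) := μH[d]

/-- `Γ ⊆ ℝⁿ` is `d`-Ahlfors regular with constant `A`:
`(1/A) rᵈ ≤ σ(B(ξ,r) ∩ Γ) ≤ A rᵈ` for all `ξ ∈ Γ` and `0 < r ≤ diam Γ`. -/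
def AhlforsRegular (d A : ℝ) (Γ : Set (Euc n)) : Prop :=
  Γ.Nonempty ∧ 0 < A ∧
    ∀ ξ ∈ Γ, ∀ r : ℝ, 0 < r → ENNReal.ofReal r ≤ EMetric.diam Γ →
      ENNReal.ofReal (r ^ d / A) ≤ hm n d (Metric.ball ξ r ∩ Γ) ∧
        hm n d (Metric.ball ξ r ∩ Γ) ≤ ENNReal.ofReal (A * r ^ d)

/-- A `λ`-carrot path from `x ∈ ∂Ω` to `y ∈ Ω`: a rectifiable curve, parameterized by
arc length (hence `1`-Lipschitz), from `x` to `y`, staying in `Ω ∪ {x}`, with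
`δ(ζ(t)) ≥ λ t`. -/
def IsCarrotPath (Ω : Set (Euc n)) (lam : ℝ) (x y : Euc n) : Prop :=
  ∃ (T : ℝ) (ζ : ℝ → Euc n), 0 ≤ T ∧ ζ 0 = x ∧ ζ T = y ∧
    LipschitzOnWith 1 ζ (Set.Icc 0 T) ∧
    (∀ t ∈ Set.Icc (0 : ℝ) T, ζ t ∈ Ω ∪ {x}) ∧
    (∀ t ∈ Set.Icc (0 : ℝ) T, lam * t ≤ bd Ω (ζ t))

/-- `y ∈ Ω` is a `(θ,λ,N)`-weak local John point. -/
def IsWLJPoint (Ω : Set (Euc n)) (d θ lam N : ℝ) (y : Euc n) : Prop :=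
  ∃ F : Set (Euc n), MeasurableSet F ∧
    F ⊆ Metric.ball y (N * bd Ω y) ∩ frontier Ω ∧
    ENNReal.ofReal θ * hm n d (Metric.ball y (N * bd Ω y) ∩ frontier Ω) ≤ hm n d F ∧
    ∀ x ∈ F, IsCarrotPath Ω lam x y

/-- The weak local John condition with specified parameters. -/
def WeakLocalJohnWith (Ω : Set (Euc n)) (d θ lam N : ℝ) : Prop :=
  0 < θ ∧ θ ≤ 1 ∧ 0 < lam ∧ lam ≤ 1 ∧ 2 ≤ N ∧ ∀ y ∈ Ω, IsWLJPoint Ω d θ lam N y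

/-- `Ω` is a weak local John domain. -/
def WeakLocalJohn (Ω : Set (Euc n)) (d : ℝ) : Prop :=
  ∃ θ lam N : ℝ, WeakLocalJohnWith Ω d θ lam N

/-- The interior corkscrew condition. -/
def InteriorCorkscrew (Ω : Set (Euc n)) : Prop :=
  ∃ ε : ℝ, 0 < ε ∧ ε < 1 ∧ ∀ x ∈ frontier Ω, ∀ r : ℝ, 0 < r →
    ENNReal.ofReal r < EMetric.diam Ω →
    ∃ z : Euc n, z ∈ Metric.ball x r ∧ Metric.ball z (ε * r) ⊆ Ω

/-- The Harnack chain condition. -/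
def HarnackChainCond (Ω : Set (Euc n)) : Prop :=
  ∃ (M m : ℝ) (Nf : ℝ → ℕ), 1 ≤ M ∧ 0 < m ∧ m < 1 ∧
    ∀ x ∈ Ω, ∀ y ∈ Ω,
      ∃ (N : ℕ) (c : Fin (N + 1) → Euc n) (r : Fin (N + 1) → ℝ),
        N ≤ Nf (dist x y / min (bd Ω x) (bd Ω y)) ∧
        x ∈ Metric.ball (c 0) (r 0) ∧ y ∈ Metric.ball (c (Fin.last N)) (r (Fin.last N)) ∧
        (∀ i : Fin N,
          (Metric.ball (c i.castSucc) (r i.castSucc) ∩ Metric.ball (c i.succ) (r i.succ)).Nonempty) ∧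
        ∀ i : Fin (N + 1), 0 < r i ∧ Metric.ball (c i) (r i) ⊆ Ω ∧
          m * (2 * r i) ≤ bd Ω (c i) - r i ∧ bd Ω (c i) - r i ≤ M * (2 * r i)

/-- The weighted ellipticity conditions
`λ δ(x)^{d+1-n} |ξ|² ≤ ξ·A(x)ξ` and `|η·A(x)ξ| ≤ Λ δ(x)^{d+1-n} |ξ||η|` on `Ω`. -/
def WeaklyElliptic (Ω : Set (Euc n)) (d lam Lam : ℝ)
    (A : Euc n → Euc n →L[ℝ] Euc n) : Prop :=
  0 < lam ∧ lam ≤ Lam ∧ (∀ v : Euc n, Measurable fun x => A x v) ∧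
    ∀ x ∈ Ω, ∀ ξ η : Euc n,
      lam * bd Ω x ^ (d + 1 - (n : ℝ)) * ‖ξ‖ ^ 2 ≤ ⟪ξ, A x ξ⟫ ∧
      |⟪η, A x ξ⟫| ≤ Lam * bd Ω x ^ (d + 1 - (n : ℝ)) * ‖ξ‖ * ‖η‖

/-- A test function on the open set `Ψ`: smooth, compactly supported, support inside `Ψ`. -/
def IsTestOn (Ψ : Set (Euc n)) (φ : Euc n → ℝ) : Prop :=
  ContDiff ℝ (⊤ : ℕ∞) φ ∧ HasCompactSupport φ ∧ tsupport φ ⊆ Ψ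

/-- `g` is the weak gradient of `u` on `Ψ`:
`∫_Ψ u ∂ᵥφ = −∫_Ψ ⟪g,v⟫ φ` for all test functions `φ` and directions `v`. -/
def HasWeakGradOn (u : Euc n → ℝ) (g : Euc n → Euc n) (Ψ : Set (Euc n)) : Prop :=
  LocallyIntegrableOn u Ψ volume ∧ LocallyIntegrableOn g Ψ volume ∧
    ∀ φ : Euc n → ℝ, IsTestOn Ψ φ → ∀ v : Euc n,
      (∫ x in Ψ, u x * fderiv ℝ φ x v) = -∫ x in Ψ, ⟪g x, v⟫ * φ x

/-- Weak formulation of `− div A ∇u = − div H` in `Ψ`, where `g` is the weak gradient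
of `u`. -/
def WeakSolOn (Ψ : Set (Euc n)) (A : Euc n → Euc n →L[ℝ] Euc n)
    (u : Euc n → ℝ) (g H : Euc n → Euc n) : Prop :=
  HasWeakGradOn u g Ψ ∧ LocallyIntegrableOn H Ψ volume ∧
    ∀ φ : Euc n → ℝ, IsTestOn Ψ φ →
      (∫ x in Ψ, ⟪gradient φ x, A x (g x)⟫) = ∫ x in Ψ, ⟪gradient φ x, H x⟫

/-- `Tr u(ξ) = 0` in the averaged sense: `r^{-n} ∫_{B(ξ,r)∩Ω} |u| → 0` as `r → 0⁺`. -/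
def TrZeroAt (Ω : Set (Euc n)) (u : Euc n → ℝ) (ξ : Euc n) : Prop :=
  Tendsto (fun r : ℝ => (1 / r ^ n) * ∫ x in Metric.ball ξ r ∩ Ω, |u x|)
    (𝓝[>] 0) (𝓝 0)

/-- The Whitney average `W_{c,β} f (y) = (⨍_{B(y, c δ(y))} |f|^β)^{1/β}`
(essential supremum if `β = ∞`), as an extended nonnegative real. -/
def wAvg (Ω : Set (Euc n)) (c : ℝ) (β : ℝ≥0∞) {F : Type*} [NormedAddCommGroup F]
    (f : Euc n → F) (y : Euc n) : ℝ≥0∞ :=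
  eLpNorm f β
    ((volume (Metric.ball y (c * bd Ω y)))⁻¹ • volume.restrict (Metric.ball y (c * bd Ω y)))

/-- The weighted averaged norm `‖f‖_{L^p_{av,c,β,s}(Ψ;Ω)}`:
`(∫_Ψ (W_{c,β}f)^p δ^{d-n+p-ps})^{1/p}`, `sup_Ψ (W_{c,β}f) δ^{1-s}` if `p = ∞`. -/
def avNormOn (Ω Ψ : Set (Euc n)) (d c : ℝ) (β p : ℝ≥0∞) (s : ℝ)
    {F : Type*} [NormedAddCommGroup F] (f : Euc n → F) : ℝ≥0∞ :=
  if p = ⊤ then ⨆ y ∈ Ψ, wAvg Ω c β f y * ENNReal.ofReal (bd Ω y) ^ (1 - s)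
  else (∫⁻ y in Ψ, wAvg Ω c β f y ^ p.toReal *
      ENNReal.ofReal (bd Ω y) ^ (d - n + p.toReal - p.toReal * s)) ^ (1 / p.toReal)

/-- The weighted averaged norm `‖f‖_{L^p_{av,c,β,s}(Ω)}`. -/
def avNorm (Ω : Set (Euc n)) (d c : ℝ) (β p : ℝ≥0∞) (s : ℝ)
    {F : Type*} [NormedAddCommGroup F] (f : Euc n → F) : ℝ≥0∞ :=
  avNormOn Ω Ω d c β p s f

/-- `f ∈ L^β_loc(Ω)`. -/
def MemLLoc (Ω : Set (Euc n)) (β : ℝ≥0∞) {F : Type*} [NormedAddCommGroup F]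
    (f : Euc n → F) : Prop :=
  AEStronglyMeasurable f (volume.restrict Ω) ∧
    ∀ K : Set (Euc n), K ⊆ Ω → IsCompact K → eLpNorm f β (volume.restrict K) < ⊤

/-- The nontangential cone `γ_a(ξ) = {x ∈ Ω : |x − ξ| < (1+a) δ(x)}`. -/
def ntCone (Ω : Set (Euc n)) (a : ℝ) (ξ : Euc n) : Set (Euc n) :=
  {x | x ∈ Ω ∧ dist x ξ < (1 + a) * bd Ω x}

/-- The nontangential maximal function `N_a f (ξ) = esssup_{γ_a(ξ)} |f|`. -/
def ntMax (Ω : Set (Euc n)) (a : ℝ) {F : Type*} [NormedAddCommGroup F]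
    (f : Euc n → F) (ξ : Euc n) : ℝ≥0∞ :=
  essSup (fun x => (‖f x‖₊ : ℝ≥0∞)) (volume.restrict (ntCone Ω a ξ))

/-- The `L^q` norm of an `ℝ≥0∞`-valued function. -/
def lqNormE (q : ℝ≥0∞) {α : Type*} [MeasurableSpace α] (μ : Measure α)
    (f : α → ℝ≥0∞) : ℝ≥0∞ :=
  if q = ⊤ then essSup f μ else (∫⁻ x, f x ^ q.toReal ∂μ) ^ (1 / q.toReal)

/-- `Tr_{a,c} u (x) = U`: `x` is in the closure of its nontangential cone, and the
Whitney averages of `|u − U|` tend to `0` nontangentially. -/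
def HasNTTrace (Ω : Set (Euc n)) (a c : ℝ) (u : Euc n → ℝ) (x : Euc n) (U : ℝ) : Prop :=
  x ∈ closure (ntCone Ω a x) ∧
    Tendsto (fun y => wAvg Ω c 1 (fun z => u z - U) y) (𝓝[ntCone Ω a x] x) (𝓝 0)

/-!
With respect to the measure `δ^{d-n} dy`, the averaged norm of `f` is the `L^p` norm of
`δ^{1-s} W_{c,β} f`. It is therefore a quasi-norm to which dominated convergence applies, and `u` is
approximated in two steps.

*Truncation.* There are test functions `0 ≤ χₖ ≤ 1` with `|∇χₖ| ≤ 8/δ` such that every Whitney ball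
lies in `{χₖ = 1}` for large `k`. The Whitney averages of `u - χₖu` and of
`∇u - ∇(χₖu) = (1 - χₖ)∇u - u∇χₖ` are thus eventually zero at each point, and they are dominated by
those of `u` and of `|∇u| + 8|u|/δ`. The latter function has finite norm because `δ` is comparable
to a constant on Whitney balls, so that dividing by `δ` lowers the exponent `s + 1` to `s`.

*Mollification.* The Whitney balls that meet a compact subset of `Ω` have centres in another compact
subset of `Ω`, so for functions supported in a fixed compact subset the averaged norms are bounded
by the `L^β` norm, in which the mollifications of `χₖu` and of its weak gradient converge.
-/

section Mollification

variable {E F : Type*} [NormedAddCommGroup E] [NormedSpace ℝ E] [HasContDiffBump E]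
  [MeasurableSpace E] [BorelSpace E] [NormedAddCommGroup F] [NormedSpace ℝ F] {μ : Measure E}
  {ρ : ContDiffBump (0 : E)} {f : E → F}

/-- The probability measure with density `ρ`, normalized to have integral `1`. Mollifications are
averages of translates with respect to it. -/
def mollifierMeasure (μ : Measure E) (ρ : ContDiffBump (0 : E)) : Measure E :=
  μ.withDensity fun t => ENNReal.ofReal (ρ.normed μ t)

/-- The mollification of `f` by the normalized bump function `ρ`, that is, their convolution; see
`mollify_eq_convolution`. -/
def mollify (μ : Measure E) (ρ : ContDiffBump (0 : E)) (f : E → F) (x : E) : F :=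
  ∫ t, f (x - t) ∂mollifierMeasure μ ρ

theorem integral_mollifierMeasure (f : E → F) :
    ∫ t, f t ∂mollifierMeasure μ ρ = ∫ t, ρ.normed μ t • f t ∂μ := by
  rw [mollifierMeasure, integral_withDensity_eq_integral_toReal_smul
    ρ.continuous_normed.measurable.ennreal_ofReal
    (Eventually.of_forall fun t => ENNReal.ofReal_lt_top)]
  simp only [ENNReal.toReal_ofReal (ρ.nonneg_normed _)]

theorem integrable_mollifierMeasure_iff :
    Integrable f (mollifierMeasure μ ρ) ↔ Integrable (fun t => ρ.normed μ t • f t) μ := by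
  rw [mollifierMeasure, integrable_withDensity_iff_integrable_smul'
    ρ.continuous_normed.measurable.ennreal_ofReal
    (Eventually.of_forall fun t => ENNReal.ofReal_lt_top)]
  simp only [ENNReal.toReal_ofReal (ρ.nonneg_normed _)]

theorem mollify_eq_convolution :
    mollify μ ρ f = convolution (ρ.normed μ) f (ContinuousLinearMap.lsmul ℝ ℝ) μ :=
  funext fun _ => integral_mollifierMeasure _

variable [FiniteDimensional ℝ E] [μ.IsAddHaarMeasure]

instance : IsProbabilityMeasure (mollifierMeasure μ ρ) where
  measure_univ := by
    rw [mollifierMeasure, withDensity_apply _ MeasurableSet.univ, Measure.restrict_univ,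
      ← ofReal_integral_eq_lintegral_ofReal ρ.integrable_normed
        (Eventually.of_forall ρ.nonneg_normed), ρ.integral_normed, ENNReal.ofReal_one]

theorem ae_mem_ball_mollifierMeasure : ∀ᵐ t ∂mollifierMeasure μ ρ, t ∈ ball 0 ρ.rOut := by
  rw [mollifierMeasure, ae_withDensity_iff ρ.continuous_normed.measurable.ennreal_ofReal]
  refine Eventually.of_forall fun t ht => ?_
  rw [← ρ.support_normed_eq (μ := μ), Function.mem_support]
  exact fun h => ht (by rw [h, ENNReal.ofReal_zero])

theorem integrable_translate_mollifierMeasure (hf : LocallyIntegrable f μ) (x : E) :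
    Integrable (fun t => f (x - t)) (mollifierMeasure μ ρ) :=
  integrable_mollifierMeasure_iff.2 (ρ.hasCompactSupport_normed.convolutionExists_left
    (ContinuousLinearMap.lsmul ℝ ℝ) ρ.continuous_normed hf x)

theorem contDiff_mollify [CompleteSpace F] (hf : LocallyIntegrable f μ) :
    ContDiff ℝ (⊤ : ℕ∞) (mollify μ ρ f) :=
  mollify_eq_convolution (μ := μ) (f := f) ▸
    ρ.hasCompactSupport_normed.contDiff_convolution_left _ ρ.contDiff_normed hf

theorem mollify_eq_of_forall_mem_ball [CompleteSpace F] {x : E} {v : F}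
    (h : ∀ y ∈ ball x ρ.rOut, f y = v) : mollify μ ρ f x = v := by
  have hae : ∀ᵐ t ∂mollifierMeasure μ ρ, f (x - t) = v :=
    ae_mem_ball_mollifierMeasure.mono fun t ht => h _ (by simpa using ht)
  rw [mollify, integral_congr_ae hae, integral_const, probReal_univ, one_smul]

theorem mollify_mem [CompleteSpace F] {s : Set F} (hs : Convex ℝ s) (hsc : IsClosed s)
    (hf : LocallyIntegrable f μ) (hfs : ∀ x, f x ∈ s) (x : E) : mollify μ ρ f x ∈ s :=
  hs.integral_mem hsc (Eventually.of_forall fun _ => hfs _)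
    (integrable_translate_mollifierMeasure hf x)

theorem lipschitzWith_mollify {C : ℝ≥0} (hf : LipschitzWith C f) :
    LipschitzWith C (mollify μ ρ f) := by
  refine LipschitzWith.of_dist_le_mul fun x y => ?_
  have hint := integrable_translate_mollifierMeasure (μ := μ) (ρ := ρ)
    hf.continuous.locallyIntegrable
  rw [dist_eq_norm, mollify, mollify, ← integral_sub (hint x) (hint y)]
  refine (norm_integral_le_of_norm_le_const (C := C * dist x y)
    (Eventually.of_forall fun t => ?_)).trans_eq (by simp)
  simpa [dist_eq_norm] using hf.dist_le_mul (x - t) (y - t)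

theorem support_mollify_subset [CompleteSpace F] {K : Set E} {η : ℝ} (hρ : ρ.rOut ≤ η)
    (hf : Function.support f ⊆ K) : Function.support (mollify μ ρ f) ⊆ cthickening η K := by
  intro x hx
  by_contra hxK
  refine hx (mollify_eq_of_forall_mem_ball fun y hy => ?_)
  by_contra hfy
  exact hxK (mem_cthickening_of_dist_le x y η K (hf hfy) ((mem_ball'.1 hy).le.trans hρ))

end Mollification

section LpApproximation

variable {α γ F : Type*} [MeasurableSpace α] [MeasurableSpace γ] [NormedAddCommGroup F]
  {q ε : ℝ≥0∞}

theorem eLpNorm_integral_le_of_ae_eLpNorm_le [NormedSpace ℝ F] {μ : Measure α} {ν : Measure γ}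
    [SFinite μ] [IsProbabilityMeasure ν] (hq₁ : 1 ≤ q) (hq : q ≠ ⊤) {k : α → γ → F}
    (hk : AEStronglyMeasurable (Function.uncurry k) (μ.prod ν))
    (h : ∀ᵐ t ∂ν, eLpNorm (fun x => k x t) q μ ≤ ε) :
    eLpNorm (fun x => ∫ t, k x t ∂ν) q μ ≤ ε := by
  have hq₀ : q ≠ 0 := (zero_lt_one.trans_le hq₁).ne'
  have hqr : 0 < q.toReal := ENNReal.toReal_pos hq₀ hq
  have hjensen : ∀ᵐ x ∂μ, ‖∫ t, k x t ∂ν‖ₑ ^ q.toReal ≤ ∫⁻ t, ‖k x t‖ₑ ^ q.toReal ∂ν := by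
    filter_upwards [hk.prodMk_left] with x hx
    have hle : ‖∫ t, k x t ∂ν‖ₑ ≤ eLpNorm (k x) q ν := by
      refine (enorm_integral_le_lintegral_enorm _).trans ?_
      rw [← eLpNorm_one_eq_lintegral_enorm]
      exact eLpNorm_le_eLpNorm_of_exponent_le hq₁ hx
    rwa [← ENNReal.le_rpow_inv_iff hqr, ← one_div,
      ← eLpNorm_eq_lintegral_rpow_enorm_toReal hq₀ hq]
  have hslice : ∀ᵐ t ∂ν, ∫⁻ x, ‖k x t‖ₑ ^ q.toReal ∂μ ≤ ε ^ q.toReal := h.mono fun t ht => by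
    rwa [eLpNorm_eq_lintegral_rpow_enorm_toReal hq₀ hq, one_div,
      ENNReal.rpow_inv_le_iff hqr] at ht
  rw [eLpNorm_eq_lintegral_rpow_enorm_toReal hq₀ hq, one_div, ENNReal.rpow_inv_le_iff hqr]
  calc ∫⁻ x, ‖∫ t, k x t ∂ν‖ₑ ^ q.toReal ∂μ
      ≤ ∫⁻ x, ∫⁻ t, ‖k x t‖ₑ ^ q.toReal ∂ν ∂μ := lintegral_mono_ae hjensen
    _ = ∫⁻ t, ∫⁻ x, ‖k x t‖ₑ ^ q.toReal ∂μ ∂ν :=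
        lintegral_lintegral_swap (hk.enorm.pow_const _)
    _ ≤ ∫⁻ _, ε ^ q.toReal ∂ν := lintegral_mono_ae hslice
    _ = ε ^ q.toReal := by simp

variable {E : Type*} [NormedAddCommGroup E] [NormedSpace ℝ E] [FiniteDimensional ℝ E]
  [MeasurableSpace E] [BorelSpace E] {μ : Measure E} [μ.IsAddHaarMeasure] {f : E → F}

theorem tendsto_eLpNorm_translate_sub (hq₁ : 1 ≤ q) (hq : q ≠ ⊤) (hf : MemLp f q μ) :
    Tendsto (fun t => eLpNorm (fun x => f (x - t) - f x) q μ) (𝓝 0) (𝓝 0) := by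
  have : Fact (1 ≤ q) := ⟨hq₁⟩
  let T : E → C(E, E) := fun t => ⟨fun x => x - t, by fun_prop⟩
  have hT : Continuous T := ContinuousMap.continuous_of_continuous_uncurry _
    (by simp only [T, Function.uncurry_def, ContinuousMap.coe_mk]; fun_prop)
  have hTm : ∀ t, MeasurePreserving (T t) μ μ := fun t => measurePreserving_sub_right μ t
  have hlim : Tendsto (fun t => Lp.compMeasurePreserving (T t) (hTm t) hf.toLp) (𝓝 0)
      (𝓝 (Lp.compMeasurePreserving (T 0) (hTm 0) hf.toLp)) :=
    tendsto_const_nhds.compMeasurePreservingLp (hT.tendsto 0) hTm (hTm 0) hq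
  have hcoe : ∀ t, Lp.compMeasurePreserving (T t) (hTm t) hf.toLp =ᵐ[μ] fun x => f (x - t) :=
    fun t => (Lp.coeFn_compMeasurePreserving _ (hTm t)).trans
      ((hTm t).quasiMeasurePreserving.ae_eq_comp hf.coeFn_toLp)
  refine (tendsto_iff_edist_tendsto_0.1 hlim).congr fun t => ?_
  rw [Lp.edist_def]
  refine eLpNorm_congr_ae ?_
  filter_upwards [hcoe t, hcoe 0] with x hx hx₀
  rw [Pi.sub_apply, hx, hx₀, sub_zero]

variable [HasContDiffBump E] [NormedSpace ℝ F] [CompleteSpace F]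

theorem eLpNorm_mollify_sub_le (hq₁ : 1 ≤ q) (hq : q ≠ ⊤) (hf : MemLp f q μ)
    {ρ : ContDiffBump (0 : E)}
    (hε : ∀ t ∈ ball (0 : E) ρ.rOut, eLpNorm (fun x => f (x - t) - f x) q μ ≤ ε) :
    eLpNorm (fun x => mollify μ ρ f x - f x) q μ ≤ ε := by
  have hloc : LocallyIntegrable f μ := hf.locallyIntegrable hq₁
  have hac : mollifierMeasure μ ρ ≪ μ := withDensity_absolutelyContinuous _ _
  have havg : ∀ x, mollify μ ρ f x - f x =
      ∫ t, (f (x - t) - f x) ∂mollifierMeasure μ ρ := fun x => by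
    rw [integral_sub (integrable_translate_mollifierMeasure hloc x) (integrable_const _),
      integral_const, probReal_univ, one_smul, mollify]
  simp only [havg]
  refine eLpNorm_integral_le_of_ae_eLpNorm_le hq₁ hq (AEStronglyMeasurable.sub ?_ hf.1.comp_fst)
    (ae_mem_ball_mollifierMeasure.mono hε)
  exact (hf.1.comp_quasiMeasurePreserving (quasiMeasurePreserving_sub μ μ)).mono_ac
    (Measure.AbsolutelyContinuous.rfl.prod hac)

theorem eventually_eLpNorm_mollify_sub_le (hq₁ : 1 ≤ q) (hq : q ≠ ⊤) (hf : MemLp f q μ)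
    (hε : 0 < ε) : ∀ᶠ η in 𝓝[>] (0 : ℝ), ∀ ρ : ContDiffBump (0 : E), ρ.rOut ≤ η →
      eLpNorm (fun x => mollify μ ρ f x - f x) q μ ≤ ε := by
  obtain ⟨η₀, hη₀, hball⟩ := Metric.eventually_nhds_iff_ball.1
    ((tendsto_eLpNorm_translate_sub hq₁ hq hf).eventually (ge_mem_nhds hε))
  filter_upwards [Ioo_mem_nhdsGT hη₀] with η hη ρ hρ
  exact eLpNorm_mollify_sub_le hq₁ hq hf fun t ht =>
    hball t (ball_subset_ball (hρ.trans hη.2.le) ht)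

end LpApproximation

section Cutoff

variable {E : Type*} [NormedAddCommGroup E] [NormedSpace ℝ E] [FiniteDimensional ℝ E]
  [HasContDiffBump E] {l : E → ℝ} {r : ℝ}

theorem exists_contDiff_lipschitzWith_cutoff (hl : LipschitzWith 1 l) (hr : 0 < r) :
    ∃ a : E → ℝ, ContDiff ℝ (⊤ : ℕ∞) a ∧ LipschitzWith r⁻¹.toNNReal a ∧
      (∀ x, a x ∈ Icc (0 : ℝ) 1) ∧ (∀ x, l x ≤ r → a x = 0) ∧ ∀ x, 4 * r ≤ l x → a x = 1 := by
  let : MeasurableSpace E := borel E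
  have : BorelSpace E := ⟨rfl⟩
  let b : E → ℝ := fun x => projIcc 0 1 zero_le_one (l x / r - 2)
  let ρ : ContDiffBump (0 : E) := ⟨r / 2, r, half_pos hr, half_lt_self hr⟩
  have hb : LipschitzWith r⁻¹.toNNReal b := LipschitzWith.of_dist_le_mul fun x y => by
    calc dist (b x) (b y) ≤ dist (l x / r - 2) (l y / r - 2) := by
          exact ((LipschitzWith.projIcc zero_le_one).dist_le_mul _ _).trans_eq (one_mul _)
      _ = r⁻¹ * dist (l x) (l y) := by
          rw [Real.dist_eq, Real.dist_eq, sub_sub_sub_cancel_right, ← sub_div, abs_div,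
            abs_of_pos hr, div_eq_inv_mul]
      _ ≤ r⁻¹.toNNReal * dist x y := by
          rw [Real.coe_toNNReal _ (inv_nonneg.2 hr.le)]
          gcongr
          simpa using hl.dist_le_mul x y
  have hball : ∀ x, ∀ y ∈ ball x r, |l y - l x| < r := fun x y hy =>
    (by simpa [Real.dist_eq] using hl.dist_le_mul y x : |l y - l x| ≤ dist y x).trans_lt hy
  have hloc : LocallyIntegrable b Measure.addHaar := hb.continuous.locallyIntegrable
  refine ⟨mollify Measure.addHaar ρ b, contDiff_mollify hloc, lipschitzWith_mollify hb,
    mollify_mem (convex_Icc 0 1) isClosed_Icc hloc fun x => Subtype.coe_prop _,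
    fun x hx => mollify_eq_of_forall_mem_ball fun y hy => ?_,
    fun x hx => mollify_eq_of_forall_mem_ball fun y hy => ?_⟩
  · have hy₂ : l y / r ≤ 2 := (div_le_iff₀ hr).2 (by linarith [abs_lt.1 (hball x y hy)])
    simp only [b, projIcc_of_le_left zero_le_one (sub_nonpos.2 hy₂)]
  · have hy₃ : 3 ≤ l y / r := (le_div_iff₀ hr).2 (by linarith [abs_lt.1 (hball x y hy)])
    simp only [b, projIcc_of_right_le zero_le_one (by linarith : 1 ≤ l y / r - 2)]

theorem exists_contDiff_cutoff_mul_norm_fderiv_le (hl : LipschitzWith 1 l) (hr : 0 < r) :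
    ∃ a : E → ℝ, ContDiff ℝ (⊤ : ℕ∞) a ∧ (∀ x, a x ∈ Icc (0 : ℝ) 1) ∧
      (∀ x, l x ≤ r → a x = 0) ∧ (∀ x, 4 * r ≤ l x → a x = 1) ∧
      ∀ x, l x * ‖fderiv ℝ a x‖ ≤ 4 := by
  obtain ⟨a, ha, halip, ha₀₁, ha₀, ha₁⟩ := exists_contDiff_lipschitzWith_cutoff hl hr
  refine ⟨a, ha, ha₀₁, ha₀, ha₁, fun x => ?_⟩
  rcases le_or_gt (l x) (4 * r) with hx | hx
  · calc l x * ‖fderiv ℝ a x‖ ≤ 4 * r * r⁻¹ := by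
          gcongr
          simpa [hr.le] using norm_fderiv_le_of_lipschitz ℝ halip (x₀ := x)
      _ = 4 := mul_inv_cancel_right₀ hr.ne' 4
  · have hconst : a =ᶠ[𝓝 x] fun _ => 1 := by
      filter_upwards [(isOpen_lt continuous_const hl.continuous).mem_nhds hx] with y hy
        using ha₁ y (le_of_lt hy)
    simp [hconst.fderiv_eq]

end Cutoff

section Gradient

variable {E : Type*} [NormedAddCommGroup E] [InnerProductSpace ℝ E] [CompleteSpace E]
  {f k : E → ℝ} {x : E}

theorem norm_gradient (f : E → ℝ) (x : E) : ‖gradient f x‖ = ‖fderiv ℝ f x‖ :=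
  LinearIsometryEquiv.norm_map _ _

theorem continuous_gradient (hf : ContDiff ℝ 1 f) : Continuous (gradient f) :=
  (LinearIsometryEquiv.continuous _).comp (hf.continuous_fderiv one_ne_zero)

theorem support_gradient_subset (f : E → ℝ) : Function.support (gradient f) ⊆ tsupport f :=
  fun x hx => by_contra fun hxf => hx <|
    (notMem_tsupport_iff_eventuallyEq.1 hxf).gradient_eq.trans (gradient_const x 0)

theorem gradient_fun_mul (hf : DifferentiableAt ℝ f x) (hk : DifferentiableAt ℝ k x) :
    gradient (fun x => f x * k x) x = f x • gradient k x + k x • gradient f x := by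
  simp [gradient, fderiv_fun_mul hf hk]

theorem norm_gradient_fun_mul_le (hf : DifferentiableAt ℝ f x) (hk : DifferentiableAt ℝ k x)
    (hf₁ : |f x| ≤ 1) (hk₁ : |k x| ≤ 1) :
    ‖gradient (fun x => f x * k x) x‖ ≤ ‖fderiv ℝ f x‖ + ‖fderiv ℝ k x‖ := by
  rw [gradient_fun_mul hf hk, ← norm_gradient f, ← norm_gradient k, add_comm]
  refine norm_add_le_of_le ?_ ?_ <;> rw [norm_smul]
  · exact mul_le_of_le_one_left (norm_nonneg _) hk₁
  · exact mul_le_of_le_one_left (norm_nonneg _) hf₁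

end Gradient

section WeakGradientMollification

variable {E F : Type*} [NormedAddCommGroup E] [NormedSpace ℝ E] [FiniteDimensional ℝ E]
  [HasContDiffBump E] [MeasurableSpace E] [BorelSpace E] [NormedAddCommGroup F] [NormedSpace ℝ F]
  {μ : Measure E} [μ.IsAddHaarMeasure] {ρ : ContDiffBump (0 : E)} {f : E → F}

theorem fderiv_mollify_apply (hf : LocallyIntegrable f μ) (x w : E) :
    fderiv ℝ (mollify μ ρ f) x w = ∫ y, fderiv ℝ (ρ.normed μ) (x - y) w • f y ∂μ := by
  have hρ : ContDiff ℝ 1 (ρ.normed μ) := ρ.contDiff_normed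
  have hint := ((ρ.hasCompactSupport_normed (μ := μ)).fderiv ℝ).convolutionExists_left
    ((ContinuousLinearMap.lsmul ℝ ℝ).precompL E) (hρ.continuous_fderiv one_ne_zero) hf x
  rw [mollify_eq_convolution, (ρ.hasCompactSupport_normed.hasFDerivAt_convolution_left
    (ContinuousLinearMap.lsmul ℝ ℝ) hρ hf x).fderiv, convolution_eq_swap,
    ContinuousLinearMap.integral_apply hint.integrable_swap]
  rfl

theorem mollify_apply_eq_integral (x : E) :
    mollify μ ρ f x = ∫ y, ρ.normed μ (x - y) • f y ∂μ := by
  rw [mollify_eq_convolution, convolution_lsmul_swap]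

end WeakGradientMollification

section BoundaryDistance

variable {Ω : Set (Euc n)} {c : ℝ}

theorem continuous_bd (Ω : Set (Euc n)) : Continuous (bd Ω) :=
  continuous_infDist_pt _

theorem bd_le_bd_add_dist (Ω : Set (Euc n)) (x y : Euc n) : bd Ω x ≤ bd Ω y + dist x y :=
  infDist_le_infDist_add_dist

theorem bd_pos (hΩ : IsOpen Ω) (hne : (frontier Ω).Nonempty) {x : Euc n} (hx : x ∈ Ω) :
    0 < bd Ω x :=
  (isClosed_frontier.notMem_iff_infDist_pos hne).1
    (disjoint_right.1 (disjoint_frontier_iff_isOpen.2 hΩ) hx)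

theorem bd_eq_infDist_compl (hΩ : IsOpen Ω) (hne : (frontier Ω).Nonempty) {x : Euc n}
    (hx : x ∈ Ω) : bd Ω x = infDist x Ωᶜ := by
  refine le_antisymm ?_ (infDist_le_infDist_of_subset (hΩ.frontier_eq ▸ fun y hy => hy.2) hne)
  obtain ⟨y, hy, hxy⟩ := exists_mem_frontier_infDist_compl_eq_dist hx
    (nonempty_frontier_iff.1 hne).2
  exact (infDist_le_dist_of_mem hy).trans_eq hxy.symm

theorem ball_bd_subset (hΩ : IsOpen Ω) (hne : (frontier Ω).Nonempty) (hc1 : c < 1) {x : Euc n}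
    (hx : x ∈ Ω) : ball x (c * bd Ω x) ⊆ Ω := by
  refine (ball_subset_ball ?_).trans (ball_infDist_compl_subset (x := x))
  rw [← bd_eq_infDist_compl hΩ hne hx]
  exact mul_le_of_le_one_left infDist_nonneg hc1.le

theorem one_sub_mul_bd_le {x y : Euc n} (hx : x ∈ ball y (c * bd Ω y)) :
    (1 - c) * bd Ω y ≤ bd Ω x := by
  linarith [bd_le_bd_add_dist Ω y x, mem_ball'.1 hx]

theorem ofReal_bd_rpow_ne_zero (hΩ : IsOpen Ω) (hne : (frontier Ω).Nonempty) {x : Euc n}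
    (hx : x ∈ Ω) (e : ℝ) : ENNReal.ofReal (bd Ω x) ^ e ≠ 0 := by
  simp [ENNReal.rpow_eq_zero_iff, bd_pos hΩ hne hx]

theorem ofReal_bd_rpow_ne_top (hΩ : IsOpen Ω) (hne : (frontier Ω).Nonempty) {x : Euc n}
    (hx : x ∈ Ω) (e : ℝ) : ENNReal.ofReal (bd Ω x) ^ e ≠ ⊤ := by
  simp [ENNReal.rpow_eq_top_iff, bd_pos hΩ hne hx]

theorem measurable_ofReal_bd_rpow (Ω : Set (Euc n)) (e : ℝ) :
    Measurable fun y => ENNReal.ofReal (bd Ω y) ^ e :=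
  (continuous_bd Ω).measurable.ennreal_ofReal.pow_const _

end BoundaryDistance

section WhitneyAverage

variable {F F' : Type*} [NormedAddCommGroup F] [NormedAddCommGroup F'] {Ω : Set (Euc n)} {c : ℝ}
  {β : ℝ≥0∞} {f f' : Euc n → F} {y : Euc n}

theorem wAvg_le_mul_wAvg {f : Euc n → F} {f' : Euc n → F'} {C : ℝ}
    (h : ∀ x ∈ ball y (c * bd Ω y), ‖f x‖ ≤ C * ‖f' x‖) :
    wAvg Ω c β f y ≤ ENNReal.ofReal C * wAvg Ω c β f' y :=
  eLpNorm_le_mul_eLpNorm_of_ae_le_mul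
    (Measure.ae_smul_measure ((ae_restrict_mem measurableSet_ball).mono h) _) β

theorem wAvg_eq_zero (h : ∀ x ∈ ball y (c * bd Ω y), f x = 0) : wAvg Ω c β f y = 0 := by
  simpa using wAvg_le_mul_wAvg (β := β) (f' := f) (C := 0) fun x hx => by simp [h x hx]

theorem wAvg_add_le (hβ : 1 ≤ β) (hf : AEStronglyMeasurable f (volume.restrict Ω))
    (hf' : AEStronglyMeasurable f' (volume.restrict Ω)) (hy : ball y (c * bd Ω y) ⊆ Ω) :
    wAvg Ω c β (fun x => f x + f' x) y ≤ wAvg Ω c β f y + wAvg Ω c β f' y :=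
  eLpNorm_add_le ((hf.mono_set hy).smul_measure _) ((hf'.mono_set hy).smul_measure _) hβ

theorem measurable_setLIntegral_whitneyBall (Ω : Set (Euc n)) (c : ℝ) {k : Euc n → ℝ≥0∞}
    (hk : Measurable k) : Measurable fun y => ∫⁻ x in ball y (c * bd Ω y), k x := by
  have hopen : IsOpen {z : Euc n × Euc n | dist z.2 z.1 < c * bd Ω z.1} :=
    isOpen_lt (by fun_prop) (((continuous_bd Ω).comp continuous_fst).const_mul c)
  simp only [← lintegral_indicator measurableSet_ball]
  exact ((hk.comp measurable_snd).indicator hopen.measurableSet).lintegral_prod_right'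

theorem measurable_wAvg (hβ₀ : β ≠ 0) (hβ : β ≠ ⊤) (hf : StronglyMeasurable f) :
    Measurable (wAvg Ω c β f) := by
  have h : wAvg Ω c β f = fun y => ((∫⁻ _ in ball y (c * bd Ω y), 1)⁻¹ *
      ∫⁻ x in ball y (c * bd Ω y), ‖f x‖ₑ ^ β.toReal) ^ (1 / β.toReal) := by
    funext y
    simp [wAvg, eLpNorm_eq_lintegral_rpow_enorm_toReal hβ₀ hβ]
  rw [h]
  exact ((measurable_setLIntegral_whitneyBall Ω c measurable_const).inv.mul
    (measurable_setLIntegral_whitneyBall Ω c (hf.enorm.pow_const _))).pow_const _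

theorem aemeasurable_wAvg (hΩ : IsOpen Ω) (hne : (frontier Ω).Nonempty) (hc1 : c < 1)
    (hβ₀ : β ≠ 0) (hβ : β ≠ ⊤) (hf : AEStronglyMeasurable f (volume.restrict Ω)) :
    AEMeasurable (wAvg Ω c β f) (volume.restrict Ω) := by
  refine ⟨wAvg Ω c β (hf.mk f), measurable_wAvg hβ₀ hβ hf.stronglyMeasurable_mk, ?_⟩
  filter_upwards [ae_restrict_mem hΩ.measurableSet] with y hy
  exact eLpNorm_congr_ae (Measure.ae_smul_measure
    (ae_restrict_of_ae_restrict_of_subset (ball_bd_subset hΩ hne hc1 hy) hf.ae_eq_mk) _)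

end WhitneyAverage

section AveragedNorm

variable {F F' : Type*} [NormedAddCommGroup F] [NormedAddCommGroup F'] {Ω : Set (Euc n)}
  {c d s : ℝ} {β p : ℝ≥0∞} {f f' : Euc n → F}

/-- The measure `δ^{d-n} dy` on `Ω`, which does not depend on the exponents `p` and `s`: the
averaged norms are `L^p` norms with respect to it, see `avNorm_eq_eLpNorm`. -/
def bdMeasure (Ω : Set (Euc n)) (d : ℝ) : Measure (Euc n) :=
  (volume.restrict Ω).withDensity fun y => ENNReal.ofReal (bd Ω y) ^ (d - n)

/-- The Whitney average `W_{c,β} f` rescaled by `δ^{1-s}`: the function of which the averaged norm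
is the `L^p` norm with respect to `bdMeasure`. -/
def scaledAvg (Ω : Set (Euc n)) (c : ℝ) (β : ℝ≥0∞) (s : ℝ) (f : Euc n → F) (y : Euc n) : ℝ≥0∞ :=
  wAvg Ω c β f y * ENNReal.ofReal (bd Ω y) ^ (1 - s)

theorem bdMeasure_absolutelyContinuous (Ω : Set (Euc n)) (d : ℝ) :
    bdMeasure Ω d ≪ volume.restrict Ω :=
  withDensity_absolutelyContinuous _ _

theorem absolutelyContinuous_bdMeasure (hΩ : IsOpen Ω) (hne : (frontier Ω).Nonempty) (d : ℝ) :
    volume.restrict Ω ≪ bdMeasure Ω d := by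
  refine withDensity_absolutelyContinuous' (measurable_ofReal_bd_rpow Ω _).aemeasurable ?_
  filter_upwards [ae_restrict_mem hΩ.measurableSet] with y hy
  exact ofReal_bd_rpow_ne_zero hΩ hne hy _

theorem ae_bdMeasure_mem (hΩ : IsOpen Ω) (d : ℝ) : ∀ᵐ y ∂bdMeasure Ω d, y ∈ Ω :=
  (bdMeasure_absolutelyContinuous Ω d).ae_le (ae_restrict_mem hΩ.measurableSet)

theorem avNorm_eq_eLpNorm (hΩ : IsOpen Ω) (hne : (frontier Ω).Nonempty) (hp₀ : p ≠ 0)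
    (hp : p ≠ ⊤) (f : Euc n → F) :
    avNorm Ω d c β p s f = eLpNorm (scaledAvg Ω c β s f) p (bdMeasure Ω d) := by
  rw [avNorm, avNormOn, if_neg hp, eLpNorm_eq_lintegral_rpow_enorm_toReal hp₀ hp, bdMeasure,
    lintegral_withDensity_eq_lintegral_mul_non_measurable₀ _
      (measurable_ofReal_bd_rpow Ω _).aemeasurable]
  · congr 1
    refine setLIntegral_congr_fun hΩ.measurableSet fun y hy => ?_
    have hy₀ : ENNReal.ofReal (bd Ω y) ≠ 0 := by simpa using bd_pos hΩ hne hy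
    simp only [Pi.mul_apply, scaledAvg, enorm_eq_self]
    rw [ENNReal.mul_rpow_of_nonneg _ _ ENNReal.toReal_nonneg, ← ENNReal.rpow_mul, mul_left_comm,
      ← ENNReal.rpow_add _ _ hy₀ ENNReal.ofReal_ne_top]
    ring_nf
  · filter_upwards [ae_restrict_mem hΩ.measurableSet] with y hy
    exact (ofReal_bd_rpow_ne_top hΩ hne hy _).lt_top

theorem aemeasurable_scaledAvg (hΩ : IsOpen Ω) (hne : (frontier Ω).Nonempty) (hc1 : c < 1)
    (hβ₀ : β ≠ 0) (hβ : β ≠ ⊤) (hf : AEStronglyMeasurable f (volume.restrict Ω)) :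
    AEMeasurable (scaledAvg Ω c β s f) (bdMeasure Ω d) :=
  ((aemeasurable_wAvg hΩ hne hc1 hβ₀ hβ hf).mono_ac (bdMeasure_absolutelyContinuous Ω d)).mul
    (measurable_ofReal_bd_rpow Ω _).aemeasurable

theorem avNorm_norm (f : Euc n → F) :
    avNorm Ω d c β p s (fun x => ‖f x‖) = avNorm Ω d c β p s f := by
  simp only [avNorm, avNormOn, wAvg, eLpNorm_norm]

theorem avNorm_le_mul_avNorm_add_one (hΩ : IsOpen Ω) (hne : (frontier Ω).Nonempty) (hc1 : c < 1)
    (hp₀ : p ≠ 0) (hp : p ≠ ⊤) {f : Euc n → F} {f' : Euc n → F'} {C : ℝ} (hC : 0 ≤ C)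
    (h : ∀ x ∈ Ω, ‖f x‖ ≤ C / bd Ω x * ‖f' x‖) :
    avNorm Ω d c β p s f ≤ ENNReal.ofReal (C / (1 - c)) * avNorm Ω d c β p (s + 1) f' := by
  rw [avNorm_eq_eLpNorm hΩ hne hp₀ hp, avNorm_eq_eLpNorm hΩ hne hp₀ hp]
  refine eLpNorm_le_mul_eLpNorm_of_ae_le_mul' ?_ p
  filter_upwards [ae_bdMeasure_mem hΩ d] with y hy
  have hy₀ : 0 < bd Ω y := bd_pos hΩ hne hy
  have havg : wAvg Ω c β f y ≤
      ENNReal.ofReal (C / (1 - c)) * ENNReal.ofReal (bd Ω y) ^ (-1 : ℝ) * wAvg Ω c β f' y := by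
    rw [ENNReal.ofReal_rpow_of_pos hy₀, Real.rpow_neg_one,
      ← ENNReal.ofReal_mul (div_nonneg hC (sub_pos.2 hc1).le), ← div_eq_mul_inv, div_div]
    refine wAvg_le_mul_wAvg fun x hx => (h x (ball_bd_subset hΩ hne hc1 hy hx)).trans ?_
    gcongr
    exact one_sub_mul_bd_le hx
  calc wAvg Ω c β f y * ENNReal.ofReal (bd Ω y) ^ (1 - s)
      ≤ ENNReal.ofReal (C / (1 - c)) * ENNReal.ofReal (bd Ω y) ^ (-1 : ℝ) * wAvg Ω c β f' y *
          ENNReal.ofReal (bd Ω y) ^ (1 - s) := by gcongr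
    _ = ENNReal.ofReal (C / (1 - c)) * (wAvg Ω c β f' y *
          (ENNReal.ofReal (bd Ω y) ^ (-1 : ℝ) * ENNReal.ofReal (bd Ω y) ^ (1 - s))) := by ring
    _ = ENNReal.ofReal (C / (1 - c)) * scaledAvg Ω c β (s + 1) f' y := by
        rw [← ENNReal.rpow_add _ _ (by simpa using hy₀) ENNReal.ofReal_ne_top, scaledAvg]
        ring_nf

theorem avNorm_add_le (hΩ : IsOpen Ω) (hne : (frontier Ω).Nonempty) (hc1 : c < 1) (hβ₁ : 1 ≤ β)
    (hβ : β ≠ ⊤) (hp₀ : p ≠ 0) (hp : p ≠ ⊤) (hf : AEStronglyMeasurable f (volume.restrict Ω))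
    (hf' : AEStronglyMeasurable f' (volume.restrict Ω)) :
    avNorm Ω d c β p s (fun x => f x + f' x) ≤
      ENNReal.LpAddConst p * (avNorm Ω d c β p s f + avNorm Ω d c β p s f') := by
  have hβ₀ : β ≠ 0 := (zero_lt_one.trans_le hβ₁).ne'
  simp only [avNorm_eq_eLpNorm hΩ hne hp₀ hp]
  refine (eLpNorm_mono_enorm_ae ?_).trans
    (eLpNorm_add_le' (aemeasurable_scaledAvg hΩ hne hc1 hβ₀ hβ hf).aestronglyMeasurable
      (aemeasurable_scaledAvg hΩ hne hc1 hβ₀ hβ hf').aestronglyMeasurable p)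
  filter_upwards [ae_bdMeasure_mem hΩ d] with y hy
  simp only [enorm_eq_self, scaledAvg, Pi.add_apply, ← add_mul]
  gcongr
  exact wAvg_add_le hβ₁ hf hf' (ball_bd_subset hΩ hne hc1 hy)

theorem tendsto_avNorm_zero_of_dominated (hΩ : IsOpen Ω) (hne : (frontier Ω).Nonempty)
    (hc1 : c < 1) (hβ₀ : β ≠ 0) (hβ : β ≠ ⊤) (hp₀ : p ≠ 0) (hp : p ≠ ⊤) {f : ℕ → Euc n → F}
    {f₀ : Euc n → F'} (hf : ∀ k, AEStronglyMeasurable (f k) (volume.restrict Ω))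
    (hdom : ∀ k, ∀ x ∈ Ω, ‖f k x‖ ≤ ‖f₀ x‖) (hfin : avNorm Ω d c β p s f₀ < ⊤)
    (hzero : ∀ y ∈ Ω, ∀ᶠ k in atTop, ∀ x ∈ ball y (c * bd Ω y), f k x = 0) :
    Tendsto (fun k => avNorm Ω d c β p s (f k)) atTop (𝓝 0) := by
  have hpr : 0 < p.toReal := ENNReal.toReal_pos hp₀ hp
  simp only [avNorm_eq_eLpNorm hΩ hne hp₀ hp] at hfin ⊢
  have hlim : Tendsto (fun k => ∫⁻ y, scaledAvg Ω c β s (f k) y ^ p.toReal ∂bdMeasure Ω d) atTop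
      (𝓝 (∫⁻ _, 0 ∂bdMeasure Ω d)) := by
    refine tendsto_lintegral_of_dominated_convergence' (fun y => scaledAvg Ω c β s f₀ y ^ p.toReal)
      (fun k => (aemeasurable_scaledAvg hΩ hne hc1 hβ₀ hβ (hf k)).pow_const _) (fun k => ?_)
      (lintegral_rpow_enorm_lt_top_of_eLpNorm_lt_top hp₀ hp hfin).ne ?_
    · filter_upwards [ae_bdMeasure_mem hΩ d] with y hy
      have havg : wAvg Ω c β (f k) y ≤ wAvg Ω c β f₀ y := by
        simpa using wAvg_le_mul_wAvg (β := β) (C := 1) fun x hx =>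
          (hdom k x (ball_bd_subset hΩ hne hc1 hy hx)).trans_eq (one_mul _).symm
      simp only [scaledAvg]
      gcongr
    · filter_upwards [ae_bdMeasure_mem hΩ d] with y hy
      refine tendsto_const_nhds.congr' ?_
      filter_upwards [hzero y hy] with k hk
      simp [scaledAvg, wAvg_eq_zero hk, hpr]
  simpa [eLpNorm_eq_lintegral_rpow_enorm_toReal hp₀ hp, Function.comp_def, hpr] using
    ((ENNReal.continuous_rpow_const (y := 1 / p.toReal)).tendsto _).comp hlim

end AveragedNorm

section CompactSubset

variable {F : Type*} [NormedAddCommGroup F] {Ω K : Set (Euc n)} {c d s : ℝ} {β p : ℝ≥0∞}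
  {f : Euc n → F}

theorem ae_wAvg_lt_top (hΩ : IsOpen Ω) (hne : (frontier Ω).Nonempty) (hc1 : c < 1) (hβ₀ : β ≠ 0)
    (hβ : β ≠ ⊤) (hp₀ : p ≠ 0) (hp : p ≠ ⊤) (hf : AEStronglyMeasurable f (volume.restrict Ω))
    (hfin : avNorm Ω d c β p s f < ⊤) : ∀ᵐ y ∂volume.restrict Ω, wAvg Ω c β f y < ⊤ := by
  rw [avNorm_eq_eLpNorm hΩ hne hp₀ hp] at hfin
  have hscaled := ae_lt_top'
    ((aemeasurable_scaledAvg hΩ hne hc1 hβ₀ hβ hf).pow_const p.toReal)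
    (lintegral_rpow_enorm_lt_top_of_eLpNorm_lt_top hp₀ hp hfin).ne
  filter_upwards [(absolutelyContinuous_bdMeasure hΩ hne d).ae_le hscaled,
    ae_restrict_mem hΩ.measurableSet] with y hy hyΩ
  rw [ENNReal.rpow_lt_top_iff_of_pos (ENNReal.toReal_pos hp₀ hp), scaledAvg] at hy
  exact ENNReal.lt_top_of_mul_ne_top_left hy.ne (ofReal_bd_rpow_ne_zero hΩ hne hyΩ _)

theorem exists_mem_nhds_eLpNorm_lt_top (hΩ : IsOpen Ω) (hne : (frontier Ω).Nonempty)
    (hc : 0 < c) (hβ : β ≠ ⊤) (hfin : ∀ᵐ y ∂volume.restrict Ω, wAvg Ω c β f y < ⊤) {x : Euc n}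
    (hx : x ∈ Ω) : ∃ U ∈ 𝓝 x, eLpNorm f β (volume.restrict U) < ⊤ := by
  have hopen : IsOpen (Ω ∩ {y | dist x y < c * bd Ω y}) :=
    hΩ.inter (isOpen_lt (by fun_prop) ((continuous_bd Ω).const_mul c))
  obtain ⟨y, ⟨hyΩ, hxy⟩, hy⟩ := (Measure.dense_of_ae
    ((ae_restrict_iff' hΩ.measurableSet).1 hfin)).inter_open_nonempty _ hopen
      ⟨x, hx, by simpa using mul_pos hc (bd_pos hΩ hne hx)⟩
  refine ⟨ball y (c * bd Ω y), isOpen_ball.mem_nhds hxy, ?_⟩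
  have hwy := hy hyΩ
  rw [wAvg, eLpNorm_smul_measure_of_ne_top hβ, smul_eq_mul] at hwy
  refine ENNReal.lt_top_of_mul_ne_top_right hwy.ne ?_
  simp [ENNReal.rpow_eq_zero_iff, measure_ball_lt_top.ne]

theorem memLLoc_of_avNorm_lt_top (hΩ : IsOpen Ω) (hne : (frontier Ω).Nonempty) (hc : 0 < c)
    (hc1 : c < 1) (hβ₀ : β ≠ 0) (hβ : β ≠ ⊤) (hp₀ : p ≠ 0) (hp : p ≠ ⊤)
    (hf : AEStronglyMeasurable f (volume.restrict Ω)) (hfin : avNorm Ω d c β p s f < ⊤) :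
    MemLLoc Ω β f := by
  refine ⟨hf, fun K hKΩ hK => ?_⟩
  refine hK.induction_on (p := fun K => eLpNorm f β (volume.restrict K) < ⊤) (by simp)
    (fun S T hST hT => (eLpNorm_mono_measure _ (Measure.restrict_mono_set _ hST)).trans_lt hT)
    (fun S T hS hT => ?_) fun x hx => ?_
  · rw [eLpNorm_lt_top_iff_lintegral_rpow_enorm_lt_top hβ₀ hβ] at hS hT ⊢
    exact (lintegral_union_le _ S T).trans_lt (ENNReal.add_lt_top.2 ⟨hS, hT⟩)
  · obtain ⟨U, hU, hfU⟩ := exists_mem_nhds_eLpNorm_lt_top hΩ hne hc hβ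
      (ae_wAvg_lt_top hΩ hne hc1 hβ₀ hβ hp₀ hp hf hfin) (hKΩ hx)
    exact ⟨U, mem_nhdsWithin_of_mem_nhds hU, hfU⟩

/- The compact set is `{y ∈ closure Ω | infDist y K ≤ c * bd Ω y}`: it avoids `frontier Ω`, where
`bd Ω` vanishes, and it is bounded since `c < 1`. -/
theorem exists_isCompact_forall_disjoint_ball_bd (hc : 0 < c) (hc1 : c < 1)
    (hK : IsCompact K) (hKΩ : K ⊆ Ω) :
    ∃ K', IsCompact K' ∧ K' ⊆ Ω ∧ ∀ y ∈ Ω, y ∉ K' → Disjoint (ball y (c * bd Ω y)) K := by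
  rcases K.eq_empty_or_nonempty with rfl | hKne
  · exact ⟨∅, isCompact_empty, empty_subset _, by simp⟩
  have hclosed : IsClosed (closure Ω ∩ {y | infDist y K ≤ c * bd Ω y}) :=
    isClosed_closure.inter
      (isClosed_le (continuous_infDist_pt K) ((continuous_bd Ω).const_mul c))
  obtain ⟨M, hM⟩ := hK.bddAbove_image (continuous_bd Ω).continuousOn
  refine ⟨_, (hK.cthickening (r := c * M / (1 - c))).of_isClosed_subset hclosed
    fun y hy => ?_, fun y hy => ?_, fun y hyΩ hy => ?_⟩
  · obtain ⟨x, hxK, hxy⟩ := hK.exists_infDist_eq_dist hKne y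
    refine mem_cthickening_of_dist_le y x _ K hxK ?_
    have hle : dist y x ≤ c * bd Ω y := hxy ▸ hy.2
    have hxM : bd Ω x ≤ M := hM (mem_image_of_mem _ hxK)
    rw [le_div_iff₀ (sub_pos.2 hc1)]
    nlinarith [bd_le_bd_add_dist Ω y x]
  · by_contra hyΩ
    have hfr : y ∈ frontier Ω := ⟨hy.1, fun h => hyΩ (interior_subset h)⟩
    have hyK : infDist y K ≤ 0 := by simpa [bd, infDist_zero_of_mem hfr] using hy.2
    exact hyΩ (hKΩ ((hK.isClosed.mem_iff_infDist_zero hKne).2 (hyK.antisymm infDist_nonneg)))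
  · have hlt : c * bd Ω y < infDist y K := not_le.1 fun h => hy ⟨subset_closure hyΩ, h⟩
    exact disjoint_ball_infDist.mono_left (ball_subset_ball hlt.le)

theorem exists_ofReal_bd_rpow_le (hΩ : IsOpen Ω) (hne : (frontier Ω).Nonempty) (hK : IsCompact K)
    (hKΩ : K ⊆ Ω) (e : ℝ) : ∃ C : ℝ≥0, ∀ y ∈ K, ENNReal.ofReal (bd Ω y) ^ e ≤ C := by
  have hcont : ContinuousOn (fun y => bd Ω y ^ e) K := (continuous_bd Ω).continuousOn.rpow_const
    fun y hy => Or.inl (bd_pos hΩ hne (hKΩ hy)).ne'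
  obtain ⟨C, hC⟩ := hK.bddAbove_image hcont
  refine ⟨C.toNNReal, fun y hy => ?_⟩
  rw [ENNReal.ofReal_rpow_of_pos (bd_pos hΩ hne (hKΩ hy))]
  exact ENNReal.ofReal_le_ofReal (hC (mem_image_of_mem _ hy))

theorem bdMeasure_lt_top_of_isCompact (hΩ : IsOpen Ω) (hne : (frontier Ω).Nonempty)
    (hK : IsCompact K) (hKΩ : K ⊆ Ω) : bdMeasure Ω d K < ⊤ := by
  obtain ⟨C, hC⟩ := exists_ofReal_bd_rpow_le hΩ hne hK hKΩ (d - n)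
  rw [bdMeasure, withDensity_apply _ hK.measurableSet,
    Measure.restrict_restrict hK.measurableSet, inter_eq_left.2 hKΩ]
  exact setLIntegral_lt_top_of_le_nnreal hK.measure_lt_top.ne ⟨C, hC⟩

theorem exists_scaledAvg_le_mul_eLpNorm (hΩ : IsOpen Ω) (hne : (frontier Ω).Nonempty)
    (hc : 0 < c) (hβ : β ≠ ⊤) (hK : IsCompact K) (hKΩ : K ⊆ Ω) (F : Type*)
    [NormedAddCommGroup F] (s : ℝ) : ∃ C : ℝ≥0, ∀ f : Euc n → F, ∀ y ∈ K,
      scaledAvg Ω c β s f y ≤ C * eLpNorm f β volume := by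
  obtain ⟨C, hC⟩ := exists_ofReal_bd_rpow_le hΩ hne hK hKΩ (1 - s)
  obtain ⟨m, hm₀, hm⟩ := hK.exists_forall_le' (continuous_bd Ω).continuousOn
    fun y hy => bd_pos hΩ hne (hKΩ hy)
  set V : ℝ≥0∞ := (volume (ball (0 : Euc n) (c * m)))⁻¹ ^ (1 / β).toReal
  have hV : V ≠ ⊤ := ENNReal.rpow_ne_top_of_nonneg ENNReal.toReal_nonneg
    (ENNReal.inv_ne_top.2 (measure_ball_pos volume _ (mul_pos hc hm₀)).ne')
  refine ⟨V.toNNReal * C, fun f y hy => ?_⟩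
  have havg : wAvg Ω c β f y ≤ V * eLpNorm f β volume := by
    rw [wAvg, eLpNorm_smul_measure_of_ne_top hβ, smul_eq_mul]
    refine mul_le_mul' (ENNReal.rpow_le_rpow (ENNReal.inv_le_inv.2 ?_) ENNReal.toReal_nonneg)
      (eLpNorm_mono_measure _ Measure.restrict_le_self)
    rw [← Measure.addHaar_ball_center volume y]
    exact measure_mono (ball_subset_ball (mul_le_mul_of_nonneg_left (hm y hy) hc.le))
  calc scaledAvg Ω c β s f y ≤ (V * eLpNorm f β volume) * C := mul_le_mul' havg (hC y hy)
    _ = (V.toNNReal * C : ℝ≥0) * eLpNorm f β volume := by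
        rw [ENNReal.coe_mul, ENNReal.coe_toNNReal hV]
        ring

theorem exists_avNorm_le_mul_eLpNorm (hΩ : IsOpen Ω) (hne : (frontier Ω).Nonempty) (hc : 0 < c)
    (hc1 : c < 1) (hβ : β ≠ ⊤) (hp₀ : p ≠ 0) (hp : p ≠ ⊤) (hK : IsCompact K) (hKΩ : K ⊆ Ω)
    (F : Type*) [NormedAddCommGroup F] (d s : ℝ) : ∃ C ≠ ⊤, ∀ f : Euc n → F,
      Function.support f ⊆ K → avNorm Ω d c β p s f ≤ C * eLpNorm f β volume := by
  obtain ⟨K', hK', hK'Ω, hdisj⟩ := exists_isCompact_forall_disjoint_ball_bd hc hc1 hK hKΩ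
  obtain ⟨C, hC⟩ := exists_scaledAvg_le_mul_eLpNorm hΩ hne hc hβ hK' hK'Ω F s
  refine ⟨C * bdMeasure Ω d K' ^ (1 / p.toReal), ENNReal.mul_ne_top ENNReal.coe_ne_top
    (ENNReal.rpow_ne_top_of_nonneg (by positivity)
      (bdMeasure_lt_top_of_isCompact hΩ hne hK' hK'Ω).ne), fun f hf => ?_⟩
  have hle : ∀ y ∈ Ω, scaledAvg Ω c β s f y ≤
      K'.indicator (fun _ => C * eLpNorm f β volume) y := fun y hy => by
    by_cases hyK' : y ∈ K'
    · simpa [hyK'] using hC f y hyK'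
    · have hzero : ∀ x ∈ ball y (c * bd Ω y), f x = 0 := fun x hx =>
        Function.notMem_support.1 fun h => disjoint_left.1 (hdisj y hy hyK') hx (hf h)
      simp [scaledAvg, wAvg_eq_zero hzero]
  rw [avNorm_eq_eLpNorm hΩ hne hp₀ hp]
  calc eLpNorm (scaledAvg Ω c β s f) p (bdMeasure Ω d)
      ≤ eLpNorm (K'.indicator fun _ => C * eLpNorm f β volume) p (bdMeasure Ω d) :=
        eLpNorm_mono_enorm_ae ((ae_bdMeasure_mem hΩ d).mono hle)
    _ = C * bdMeasure Ω d K' ^ (1 / p.toReal) * eLpNorm f β volume := by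
        rw [eLpNorm_indicator_const hK'.measurableSet hp₀ hp, enorm_eq_self]
        ring

end CompactSubset

section LocalLp

variable {F F' : Type*} [NormedAddCommGroup F] [NormedAddCommGroup F'] {Ω K : Set (Euc n)}
  {β : ℝ≥0∞} {f : Euc n → F} {f' : Euc n → F'} {a : Euc n → ℝ}

theorem MemLLoc.memLp_of_norm_le_mul (hf : MemLLoc Ω β f) (hK : IsCompact K) (hKΩ : K ⊆ Ω)
    (hf' : AEStronglyMeasurable f' (volume.restrict K)) (hf'K : Function.support f' ⊆ K) {C : ℝ}
    (hle : ∀ x ∈ K, ‖f' x‖ ≤ C * ‖f x‖) : MemLp f' β volume := by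
  rw [← indicator_eq_self.2 hf'K, memLp_indicator_iff_restrict hK.measurableSet]
  exact MemLp.of_le_mul ⟨hf.1.mono_set hKΩ, hf.2 K hKΩ hK⟩ hf'
    ((ae_restrict_mem hK.measurableSet).mono hle)

theorem MemLLoc.memLp_continuous_smul [NormedSpace ℝ F] (hf : MemLLoc Ω β f) (hK : IsCompact K)
    (hKΩ : K ⊆ Ω) (ha : Continuous a) (haK : Function.support a ⊆ K) :
    MemLp (fun x => a x • f x) β volume := by
  obtain ⟨C, hC⟩ := hK.exists_bound_of_continuousOn ha.continuousOn
  refine hf.memLp_of_norm_le_mul hK hKΩ (ha.aestronglyMeasurable.smul (hf.1.mono_set hKΩ))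
    ((Function.support_smul_subset_left _ _).trans haK) (C := C) fun x hx => ?_
  rw [norm_smul]
  exact mul_le_mul_of_nonneg_right (hC x hx) (norm_nonneg _)

theorem MemLLoc.memLp_smul_continuous [NormedSpace ℝ F] (ha : MemLLoc Ω β a) (hK : IsCompact K)
    (hKΩ : K ⊆ Ω) (hf : Continuous f) (hfK : Function.support f ⊆ K) :
    MemLp (fun x => a x • f x) β volume := by
  obtain ⟨C, hC⟩ := hK.exists_bound_of_continuousOn hf.continuousOn
  refine ha.memLp_of_norm_le_mul hK hKΩ ((ha.1.mono_set hKΩ).smul hf.aestronglyMeasurable)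
    ((Function.support_smul_subset_right _ _).trans hfK) (C := C) fun x hx => ?_
  rw [norm_smul, mul_comm]
  exact mul_le_mul_of_nonneg_right (hC x hx) (norm_nonneg _)

end LocalLp

section DomainCutoff

variable {Ω : Set (Euc n)} {c : ℝ}

theorem exists_isTestOn_norm_gradient_le (hΩ : IsOpen Ω) (hne : (frontier Ω).Nonempty) {r R : ℝ}
    (hr : 0 < r) (hR : 0 < R) : ∃ χ : Euc n → ℝ, IsTestOn Ω χ ∧ (∀ x, χ x ∈ Icc (0 : ℝ) 1) ∧
      (∀ x ∈ Ω, ‖gradient χ x‖ ≤ 8 / bd Ω x) ∧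
      ∀ x ∈ Ω, 4 * r ≤ bd Ω x → ‖x‖ + bd Ω 0 ≤ R → χ x = 1 := by
  have hl : LipschitzWith 1 fun x => infDist x Ωᶜ := lipschitz_infDist_pt _
  have hl' : LipschitzWith 1 fun x : Euc n => ‖x‖ + bd Ω 0 := by
    simpa using lipschitzWith_one_norm.add (LipschitzWith.const (bd Ω 0))
  obtain ⟨a, ha, ha₀₁, ha₀, ha₁, hda⟩ := exists_contDiff_cutoff_mul_norm_fderiv_le hl hr
  obtain ⟨b, hb, hb₀₁, hb₀, hb₁, hdb⟩ := exists_contDiff_cutoff_mul_norm_fderiv_le hl' hR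
  have hclosed : IsClosed {x | r ≤ infDist x Ωᶜ} := isClosed_le continuous_const hl.continuous
  have hsupp : tsupport (fun x => a x * (1 - b x)) ⊆
      {x | r ≤ infDist x Ωᶜ} ∩ closedBall 0 (4 * R) := by
    refine closure_minimal (fun x hx => ⟨?_, ?_⟩) (hclosed.inter isClosed_closedBall)
    · exact show r ≤ infDist x Ωᶜ from le_of_not_ge fun h => hx (by simp [ha₀ x h])
    · refine mem_closedBall_zero_iff.2 (le_of_not_ge fun h => hx ?_)
      simp [hb₁ x (le_add_of_le_of_nonneg h infDist_nonneg)]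
  refine ⟨fun x => a x * (1 - b x), ⟨ha.mul (contDiff_const.sub hb),
    (isCompact_closedBall _ _).of_isClosed_subset (isClosed_tsupport _)
      (hsupp.trans inter_subset_right), fun x hx => ?_⟩,
    fun x => ⟨mul_nonneg (ha₀₁ x).1 (sub_nonneg.2 (hb₀₁ x).2),
      mul_le_one₀ (ha₀₁ x).2 (sub_nonneg.2 (hb₀₁ x).2) (sub_le_self _ (hb₀₁ x).1)⟩,
    fun x hx => ?_, fun x hx hxr hxR => ?_⟩
  · by_contra hxΩ
    have hrx : r ≤ infDist x Ωᶜ := (hsupp hx).1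
    rw [infDist_zero_of_mem (mem_compl hxΩ)] at hrx
    exact hr.not_ge hrx
  · rw [le_div_iff₀' (bd_pos hΩ hne hx)]
    have hbd : bd Ω x ≤ ‖x‖ + bd Ω 0 := by simpa [add_comm] using bd_le_bd_add_dist Ω x 0
    calc bd Ω x * ‖gradient (fun x => a x * (1 - b x)) x‖
        ≤ bd Ω x * (‖fderiv ℝ a x‖ + ‖fderiv ℝ (fun x => 1 - b x) x‖) := by
          refine mul_le_mul_of_nonneg_left (norm_gradient_fun_mul_le
            (ha.differentiable (by simp) x) ((hb.differentiable (by simp) x).const_sub 1)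
            ?_ ?_) infDist_nonneg
          · exact abs_le.2 ⟨by linarith [(ha₀₁ x).1], (ha₀₁ x).2⟩
          · exact abs_le.2 ⟨by linarith [(hb₀₁ x).2], by linarith [(hb₀₁ x).1]⟩
      _ ≤ infDist x Ωᶜ * ‖fderiv ℝ a x‖ + (‖x‖ + bd Ω 0) * ‖fderiv ℝ b x‖ := by
          rw [mul_add, fderiv_const_sub, norm_neg, bd_eq_infDist_compl hΩ hne hx]
          gcongr
          rwa [← bd_eq_infDist_compl hΩ hne hx]
      _ ≤ 8 := by linarith [hda x, hdb x]
  · simp [ha₁ x (by rwa [← bd_eq_infDist_compl hΩ hne hx]), hb₀ x hxR]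

theorem exists_seq_isTestOn_eventually_eq_one (hΩ : IsOpen Ω) (hne : (frontier Ω).Nonempty)
    (hc1 : c < 1) : ∃ χ : ℕ → Euc n → ℝ, (∀ k, IsTestOn Ω (χ k)) ∧
      (∀ k x, χ k x ∈ Icc (0 : ℝ) 1) ∧ (∀ k, ∀ x ∈ Ω, ‖gradient (χ k) x‖ ≤ 8 / bd Ω x) ∧
      ∀ y ∈ Ω, ∀ᶠ k in atTop, ∀ x ∈ ball y (c * bd Ω y), χ k x = 1 := by
  choose χ hχ h₀₁ hgrad hone using fun k : ℕ =>
    exists_isTestOn_norm_gradient_le hΩ hne (r := 1 / ((k : ℝ) + 1)) (R := (k : ℝ) + 1)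
      (by positivity) (by positivity)
  refine ⟨χ, hχ, h₀₁, hgrad, fun y hy => ?_⟩
  have hpos : 0 < (1 - c) * bd Ω y := mul_pos (sub_pos.2 hc1) (bd_pos hΩ hne hy)
  have hlim : Tendsto (fun k : ℕ => 4 * (1 / ((k : ℝ) + 1))) atTop (𝓝 0) := by
    simpa using tendsto_one_div_add_atTop_nhds_zero_nat.const_mul (4 : ℝ)
  filter_upwards [hlim.eventually (ge_mem_nhds hpos),
    tendsto_natCast_atTop_atTop.eventually_ge_atTop (‖y‖ + c * bd Ω y + bd Ω 0)] with k hk hkR x hx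
  refine hone k x (ball_bd_subset hΩ hne hc1 hy hx) (hk.trans (one_sub_mul_bd_le hx)) ?_
  linarith [mem_ball_iff_norm.1 hx, norm_le_norm_add_norm_sub' x y]

end DomainCutoff

section WeakGradient

variable {Ω : Set (Euc n)} {χ φ u : Euc n → ℝ} {g : Euc n → Euc n}

theorem IsTestOn.integrable_smul {F : Type*} [NormedAddCommGroup F] [NormedSpace ℝ F]
    (hχ : IsTestOn Ω χ) {f : Euc n → F} (hf : LocallyIntegrableOn f Ω volume) :
    Integrable fun x => χ x • f x := by
  obtain ⟨hχs, hχc, hχΩ⟩ := hχ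
  exact (integrableOn_iff_integrable_of_support_subset
    ((Function.support_smul_subset_left _ _).trans (subset_tsupport χ))).1
    ((hf.integrableOn_compact_subset hχΩ hχc).continuousOn_smul hχs.continuous.continuousOn hχc)

theorem IsTestOn.integrable_smul_gradient (hχ : IsTestOn Ω χ)
    (hu : LocallyIntegrableOn u Ω volume) : Integrable fun x => u x • gradient χ x := by
  obtain ⟨hχs, hχc, hχΩ⟩ := hχ
  exact (integrableOn_iff_integrable_of_support_subset
    ((Function.support_smul_subset_right _ _).trans (support_gradient_subset χ))).1
    ((hu.integrableOn_compact_subset hχΩ hχc).smul_continuousOn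
      (continuous_gradient (hχs.of_le (by simp))).continuousOn hχc)

theorem HasWeakGradOn.integral_mul_fderiv (h : HasWeakGradOn u g Ω) (hφ : IsTestOn Ω φ)
    (w : Euc n) : ∫ x, u x * fderiv ℝ φ x w = -∫ x, ⟪g x, w⟫ * φ x := by
  have hφ₀ : ∀ x ∉ Ω, φ x = 0 := fun x hx =>
    image_eq_zero_of_notMem_tsupport fun hxφ => hx (hφ.2.2 hxφ)
  have hdφ₀ : ∀ x ∉ Ω, fderiv ℝ φ x = 0 := fun x hx =>
    Function.notMem_support.1 fun hxφ => hx (hφ.2.2 (support_fderiv_subset ℝ hxφ))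
  have hweak := h.2.2 φ hφ w
  rwa [setIntegral_eq_integral_of_forall_compl_eq_zero fun x hx => by simp [hdφ₀ x hx],
    setIntegral_eq_integral_of_forall_compl_eq_zero fun x hx => by simp [hφ₀ x hx]] at hweak

theorem HasWeakGradOn.mul_isTestOn (h : HasWeakGradOn u g Ω) (hχ : IsTestOn Ω χ) :
    HasWeakGradOn (fun x => χ x * u x) (fun x => χ x • g x + u x • gradient χ x) univ := by
  have hχu : Integrable fun x => χ x * u x := hχ.integrable_smul h.1
  have hχg : Integrable fun x => χ x • g x := hχ.integrable_smul h.2.1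
  have hudχ : Integrable fun x => u x • gradient χ x := hχ.integrable_smul_gradient h.1
  refine ⟨hχu.locallyIntegrable.locallyIntegrableOn _,
    (hχg.add hudχ).locallyIntegrable.locallyIntegrableOn _, fun φ ⟨hφ, hφc, _⟩ w => ?_⟩
  have hψ : IsTestOn Ω fun x => χ x * φ x :=
    ⟨hχ.1.mul hφ, hχ.2.1.mul_right, tsupport_mul_subset_left.trans hχ.2.2⟩
  have hleibniz : ∀ x, u x * fderiv ℝ (fun y => χ y * φ y) x w =
      χ x * u x * fderiv ℝ φ x w + ⟪u x • gradient χ x, w⟫ * φ x := fun x => by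
    rw [fderiv_fun_mul (hχ.1.differentiable (by simp) x) (hφ.differentiable (by simp) x),
      real_inner_smul_left, inner_gradient_left]
    simp only [add_apply, smul_apply, smul_eq_mul]
    ring
  have hint : ∀ {k : Euc n → Euc n}, Integrable k →
      Integrable fun x => ⟪k x, w⟫ * φ x := fun hk =>
    (hk.inner_const (𝕜 := ℝ) w).locallyIntegrable.integrable_smul_right_of_hasCompactSupport
      hφ.continuous hφc
  have hint' : Integrable fun x => χ x * u x * fderiv ℝ φ x w :=
    hχu.locallyIntegrable.integrable_smul_right_of_hasCompactSupport
      ((hφ.continuous_fderiv (by simp)).clm_apply continuous_const)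
      ((hφc.fderiv ℝ).comp_left (g := fun L : Euc n →L[ℝ] ℝ => L w) rfl)
  have hweak : ∫ x, u x * fderiv ℝ (fun y => χ y * φ y) x w = -∫ x, ⟪χ x • g x, w⟫ * φ x := by
    simpa only [real_inner_smul_left, mul_assoc, mul_left_comm] using h.integral_mul_fderiv hψ w
  simp only [hleibniz] at hweak
  rw [integral_add hint' (hint hudχ)] at hweak
  simp only [Measure.restrict_univ, inner_add_left, add_mul]
  rw [integral_add (hint hχg) (hint hudχ)]
  linarith

end WeakGradient

section SobolevApproximation

variable {Ω : Set (Euc n)} {β : ℝ≥0∞} {v : Euc n → ℝ} {h : Euc n → Euc n}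

theorem HasWeakGradOn.gradient_mollify (hvh : HasWeakGradOn v h univ)
    (ρ : ContDiffBump (0 : Euc n)) : gradient (mollify volume ρ v) = mollify volume ρ h := by
  have hv : LocallyIntegrable v volume := locallyIntegrableOn_univ.1 hvh.1
  have hh : LocallyIntegrable h volume := locallyIntegrableOn_univ.1 hvh.2.1
  ext1 x
  refine ext_inner_right ℝ fun w => ?_
  have hψ : IsTestOn univ fun y => ρ.normed volume (x - y) :=
    ⟨ρ.contDiff_normed.comp (contDiff_const.sub contDiff_id),
      ρ.hasCompactSupport_normed.comp_homeomorph (Homeomorph.subLeft x), subset_univ _⟩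
  have hψd : ∀ y, fderiv ℝ (fun y => ρ.normed volume (x - y)) y w =
      -fderiv ℝ (ρ.normed volume) (x - y) w := fun y => by
    have hρ : HasFDerivAt (ρ.normed volume) (fderiv ℝ (ρ.normed volume) (x - y)) (x - y) :=
      (ρ.contDiff_normed.differentiable one_ne_zero _).hasFDerivAt
    have hcomp : HasFDerivAt (fun y => ρ.normed volume (x - y)) _ y :=
      hρ.comp y ((hasFDerivAt_id y).const_sub x)
    simp [hcomp.fderiv]
  have hint : Integrable fun y => ρ.normed volume (x - y) • h y :=
    hh.integrable_smul_left_of_hasCompactSupport hψ.1.continuous hψ.2.1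
  calc ⟪gradient (mollify volume ρ v) x, w⟫
      = ∫ y, fderiv ℝ (ρ.normed volume) (x - y) w • v y := by
        rw [inner_gradient_left, fderiv_mollify_apply hv]
    _ = ∫ y, ⟪h y, w⟫ * ρ.normed volume (x - y) := by
        simpa only [hψd, mul_neg, integral_neg, neg_inj, smul_eq_mul, mul_comm]
          using hvh.integral_mul_fderiv hψ w
    _ = ⟪mollify volume ρ h x, w⟫ := by
        rw [mollify_apply_eq_integral, real_inner_comm, ← integral_inner hint]
        simp only [real_inner_smul_right, real_inner_comm, mul_comm]

theorem isTestOn_mollify {K : Set (Euc n)} {η : ℝ} (hK : IsCompact K)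
    (hKΩ : cthickening η K ⊆ Ω) (hv : LocallyIntegrable v volume)
    (hvK : Function.support v ⊆ K) {ρ : ContDiffBump (0 : Euc n)} (hρ : ρ.rOut ≤ η) :
    IsTestOn Ω (mollify volume ρ v) := by
  have hsupp : tsupport (mollify volume ρ v) ⊆ cthickening η K :=
    closure_minimal (support_mollify_subset hρ hvK) isClosed_cthickening
  exact ⟨contDiff_mollify hv, hK.cthickening.of_isClosed_subset (isClosed_tsupport _) hsupp,
    hsupp.trans hKΩ⟩

theorem exists_isTestOn_eLpNorm_sub_le (hβ₁ : 1 ≤ β) (hβ : β ≠ ⊤) (hΩ : IsOpen Ω)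
    {K : Set (Euc n)} (hK : IsCompact K) (hKΩ : K ⊆ Ω) (hvh : HasWeakGradOn v h univ)
    (hv : MemLp v β volume) (hh : MemLp h β volume) (hvK : Function.support v ⊆ K)
    (hhK : Function.support h ⊆ K) :
    ∃ K', IsCompact K' ∧ K' ⊆ Ω ∧ ∀ ε : ℝ≥0∞, 0 < ε → ∃ φ : Euc n → ℝ, IsTestOn Ω φ ∧
      Function.support (fun x => v x - φ x) ⊆ K' ∧
      Function.support (fun x => h x - gradient φ x) ⊆ K' ∧
      eLpNorm (fun x => v x - φ x) β volume ≤ ε ∧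
      eLpNorm (fun x => h x - gradient φ x) β volume ≤ ε := by
  obtain ⟨η₀, hη₀, hsub⟩ := hK.exists_cthickening_subset_open hΩ hKΩ
  have hKη₀ : K ⊆ cthickening η₀ K := self_subset_cthickening K
  refine ⟨cthickening η₀ K, hK.cthickening, hsub, fun ε hε => ?_⟩
  obtain ⟨η, ⟨hηv, hηh⟩, hη⟩ := (((eventually_eLpNorm_mollify_sub_le hβ₁ hβ hv hε).and
    (eventually_eLpNorm_mollify_sub_le hβ₁ hβ hh hε)).and (Ioo_mem_nhdsGT hη₀)).exists
  let ρ : ContDiffBump (0 : Euc n) := ⟨η / 2, η, half_pos hη.1, half_lt_self hη.1⟩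
  have hρ : ρ.rOut ≤ η₀ := hη.2.le
  refine ⟨mollify volume ρ v, isTestOn_mollify hK hsub (hv.locallyIntegrable hβ₁) hvK hρ, ?_⟩
  rw [hvh.gradient_mollify ρ]
  refine ⟨(Function.support_sub _ _).trans (union_subset (hvK.trans hKη₀)
      (support_mollify_subset hρ hvK)),
    (Function.support_sub _ _).trans (union_subset (hhK.trans hKη₀)
      (support_mollify_subset hρ hhK)), ?_, ?_⟩
  · rw [← Pi.sub_def, eLpNorm_sub_comm]
    exact hηv ρ le_rfl
  · rw [← Pi.sub_def, eLpNorm_sub_comm]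
    exact hηh ρ le_rfl

end SobolevApproximation

section Density

variable {Ω K : Set (Euc n)} {c d s : ℝ} {β p : ℝ≥0∞} {u v : Euc n → ℝ} {g h : Euc n → Euc n}

/-- The norm of `W̃^{1,p}_{av,c,β,s}(Ω)`, as a function of `u` and its weak gradient `g`. -/
def avSobolevNorm (Ω : Set (Euc n)) (d c : ℝ) (β p : ℝ≥0∞) (s : ℝ) (u : Euc n → ℝ)
    (g : Euc n → Euc n) : ℝ≥0∞ :=
  avNorm Ω d c β p s g + avNorm Ω d c β p (s + 1) u

theorem avSobolevNorm_add_le (hΩ : IsOpen Ω) (hne : (frontier Ω).Nonempty) (hc1 : c < 1)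
    (hβ₁ : 1 ≤ β) (hβ : β ≠ ⊤) (hp₀ : p ≠ 0) (hp : p ≠ ⊤)
    (hu : AEStronglyMeasurable u (volume.restrict Ω))
    (hg : AEStronglyMeasurable g (volume.restrict Ω))
    (hv : AEStronglyMeasurable v (volume.restrict Ω))
    (hh : AEStronglyMeasurable h (volume.restrict Ω)) :
    avSobolevNorm Ω d c β p s (fun x => u x + v x) (fun x => g x + h x) ≤
      ENNReal.LpAddConst p * (avSobolevNorm Ω d c β p s u g + avSobolevNorm Ω d c β p s v h) := by
  refine (add_le_add (avNorm_add_le hΩ hne hc1 hβ₁ hβ hp₀ hp hg hh)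
    (avNorm_add_le hΩ hne hc1 hβ₁ hβ hp₀ hp hu hv)).trans_eq ?_
  simp only [avSobolevNorm]
  ring

theorem avNorm_add_div_bd_lt_top (hΩ : IsOpen Ω) (hne : (frontier Ω).Nonempty) (hc1 : c < 1)
    (hβ₁ : 1 ≤ β) (hβ : β ≠ ⊤) (hp₀ : p ≠ 0) (hp : p ≠ ⊤)
    (hu : AEStronglyMeasurable u (volume.restrict Ω))
    (hg : AEStronglyMeasurable g (volume.restrict Ω))
    (hfin : avSobolevNorm Ω d c β p s u g < ⊤) {C : ℝ} (hC : 0 ≤ C) :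
    avNorm Ω d c β p s (fun x => ‖g x‖ + C / bd Ω x * ‖u x‖) < ⊤ := by
  obtain ⟨hgfin, hufin⟩ := ENNReal.add_lt_top.1 hfin
  have hmeas : Measurable fun x => C / bd Ω x := (continuous_bd Ω).measurable.const_div C
  have hhardy : avNorm Ω d c β p s (fun x => C / bd Ω x * ‖u x‖) < ⊤ :=
    (avNorm_le_mul_avNorm_add_one hΩ hne hc1 hp₀ hp hC fun x hx => by
      rw [norm_mul, norm_norm, Real.norm_of_nonneg (div_nonneg hC (bd_pos hΩ hne hx).le)]).trans_lt
      (ENNReal.mul_lt_top ENNReal.ofReal_lt_top hufin)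
  refine (avNorm_add_le hΩ hne hc1 hβ₁ hβ hp₀ hp hg.norm
    (hmeas.aestronglyMeasurable.mul hu.norm)).trans_lt ?_
  rw [avNorm_norm]
  exact ENNReal.mul_lt_top (ENNReal.LpAddConst_lt_top p) (ENNReal.add_lt_top.2 ⟨hgfin, hhardy⟩)

theorem tendsto_avSobolevNorm_sub_mul_zero (hΩ : IsOpen Ω) (hne : (frontier Ω).Nonempty)
    (hc1 : c < 1) (hβ₁ : 1 ≤ β) (hβ : β ≠ ⊤) (hp₀ : p ≠ 0) (hp : p ≠ ⊤)
    (hu : AEStronglyMeasurable u (volume.restrict Ω))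
    (hg : AEStronglyMeasurable g (volume.restrict Ω))
    (hfin : avSobolevNorm Ω d c β p s u g < ⊤) {χ : ℕ → Euc n → ℝ} {C : ℝ} (hC : 0 ≤ C)
    (hχ : ∀ k, ContDiff ℝ 1 (χ k)) (hχ₀₁ : ∀ k x, χ k x ∈ Icc (0 : ℝ) 1)
    (hgrad : ∀ k, ∀ x ∈ Ω, ‖gradient (χ k) x‖ ≤ C / bd Ω x)
    (hone : ∀ y ∈ Ω, ∀ᶠ k in atTop, ∀ x ∈ ball y (c * bd Ω y), χ k x = 1) :
    Tendsto (fun k => avSobolevNorm Ω d c β p s (fun x => u x - χ k x * u x)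
      (fun x => g x - (χ k x • g x + u x • gradient (χ k) x))) atTop (𝓝 0) := by
  have hβ₀ : β ≠ 0 := (zero_lt_one.trans_le hβ₁).ne'
  have hχm : ∀ k, AEStronglyMeasurable (χ k) (volume.restrict Ω) := fun k =>
    (hχ k).continuous.aestronglyMeasurable
  have hle : ∀ k x, ‖1 - χ k x‖ ≤ 1 := fun k x =>
    abs_le.2 ⟨by linarith [(hχ₀₁ k x).2], by linarith [(hχ₀₁ k x).1]⟩
  have htend_u : Tendsto (fun k => avNorm Ω d c β p (s + 1) fun x => u x - χ k x * u x)
      atTop (𝓝 0) := by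
    refine tendsto_avNorm_zero_of_dominated hΩ hne hc1 hβ₀ hβ hp₀ hp
      (fun k => hu.sub ((hχm k).mul hu)) (fun k x _ => ?_) (ENNReal.add_lt_top.1 hfin).2
      fun y hy => ?_
    · rw [← one_sub_mul, norm_mul]
      exact mul_le_of_le_one_left (norm_nonneg _) (hle k x)
    · filter_upwards [hone y hy] with k hk x hx
      simp [hk x hx]
  have htend_g : Tendsto (fun k => avNorm Ω d c β p s fun x =>
      g x - (χ k x • g x + u x • gradient (χ k) x)) atTop (𝓝 0) := by
    refine tendsto_avNorm_zero_of_dominated hΩ hne hc1 hβ₀ hβ hp₀ hp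
      (fun k => hg.sub (((hχm k).smul hg).add
        (hu.smul (continuous_gradient (hχ k)).aestronglyMeasurable))) (fun k x hx => ?_)
      (avNorm_add_div_bd_lt_top hΩ hne hc1 hβ₁ hβ hp₀ hp hu hg hfin hC) fun y hy => ?_
    · rw [show g x - (χ k x • g x + u x • gradient (χ k) x) =
        (1 - χ k x) • g x - u x • gradient (χ k) x by module]
      refine (norm_sub_le _ _).trans (le_trans ?_ (le_abs_self _))
      rw [norm_smul, norm_smul, mul_comm ‖u x‖]
      exact add_le_add (mul_le_of_le_one_left (norm_nonneg _) (hle k x))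
        (mul_le_mul_of_nonneg_right (hgrad k x hx) (norm_nonneg _))
    · filter_upwards [hone y hy] with k hk x hx
      have hconst : χ k =ᶠ[𝓝 x] fun _ => 1 := mem_of_superset (isOpen_ball.mem_nhds hx) hk
      simp [hk x hx, hconst.gradient_eq.trans (gradient_const x 1)]
  simpa only [avSobolevNorm, add_zero] using htend_g.add htend_u

theorem exists_isTestOn_avSobolevNorm_sub_le (hΩ : IsOpen Ω) (hne : (frontier Ω).Nonempty)
    (hc : 0 < c) (hc1 : c < 1) (hβ₁ : 1 ≤ β) (hβ : β ≠ ⊤) (hp₀ : p ≠ 0) (hp : p ≠ ⊤)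
    (hK : IsCompact K) (hKΩ : K ⊆ Ω) (hvh : HasWeakGradOn v h univ) (hv : MemLp v β volume)
    (hh : MemLp h β volume) (hvK : Function.support v ⊆ K) (hhK : Function.support h ⊆ K)
    (d s : ℝ) {ε : ℝ≥0∞} (hε : 0 < ε) : ∃ φ : Euc n → ℝ, IsTestOn Ω φ ∧
      avSobolevNorm Ω d c β p s (fun x => v x - φ x) (fun x => h x - gradient φ x) ≤ ε := by
  obtain ⟨K', hK', hK'Ω, happrox⟩ :=
    exists_isTestOn_eLpNorm_sub_le hβ₁ hβ hΩ hK hKΩ hvh hv hh hvK hhK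
  obtain ⟨C₁, hC₁, hle₁⟩ :=
    exists_avNorm_le_mul_eLpNorm hΩ hne hc hc1 hβ hp₀ hp hK' hK'Ω (Euc n) d s
  obtain ⟨C₂, hC₂, hle₂⟩ :=
    exists_avNorm_le_mul_eLpNorm hΩ hne hc hc1 hβ hp₀ hp hK' hK'Ω ℝ d (s + 1)
  obtain ⟨φ, hφ, hvφK', hhφK', hvφ, hhφ⟩ := happrox (ε / (C₁ + C₂))
    (ENNReal.div_pos hε.ne' (ENNReal.add_ne_top.2 ⟨hC₁, hC₂⟩))
  refine ⟨φ, hφ, ?_⟩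
  calc avSobolevNorm Ω d c β p s (fun x => v x - φ x) (fun x => h x - gradient φ x)
      ≤ C₁ * (ε / (C₁ + C₂)) + C₂ * (ε / (C₁ + C₂)) := by
        unfold avSobolevNorm
        grw [hle₁ _ hhφK', hle₂ _ hvφK', hvφ, hhφ]
    _ = (C₁ + C₂) * (ε / (C₁ + C₂)) := (add_mul _ _ _).symm
    _ ≤ ε := ENNReal.mul_div_le

theorem HasWeakGradOn.exists_isTestOn_avSobolevNorm_mul_sub_le (hug : HasWeakGradOn u g Ω)
    (hΩ : IsOpen Ω) (hne : (frontier Ω).Nonempty) (hc : 0 < c) (hc1 : c < 1) (hβ₁ : 1 ≤ β)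
    (hβ : β ≠ ⊤) (hp₀ : p ≠ 0) (hp : p ≠ ⊤) (hfin : avSobolevNorm Ω d c β p s u g < ⊤)
    {χ : Euc n → ℝ} (hχ : IsTestOn Ω χ) {ε : ℝ≥0∞} (hε : 0 < ε) :
    ∃ φ : Euc n → ℝ, IsTestOn Ω φ ∧ avSobolevNorm Ω d c β p s (fun x => χ x * u x - φ x)
      (fun x => χ x • g x + u x • gradient χ x - gradient φ x) ≤ ε := by
  have hβ₀ : β ≠ 0 := (zero_lt_one.trans_le hβ₁).ne'
  obtain ⟨hgfin, hufin⟩ := ENNReal.add_lt_top.1 hfin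
  have hu : MemLLoc Ω β u :=
    memLLoc_of_avNorm_lt_top hΩ hne hc hc1 hβ₀ hβ hp₀ hp hug.1.aestronglyMeasurable hufin
  have hg : MemLLoc Ω β g :=
    memLLoc_of_avNorm_lt_top hΩ hne hc hc1 hβ₀ hβ hp₀ hp hug.2.1.aestronglyMeasurable hgfin
  have hweak := hug.mul_isTestOn hχ
  obtain ⟨hχs, hχc, hχΩ⟩ := hχ
  have hχK : Function.support χ ⊆ tsupport χ := subset_tsupport χ
  have hdχK : Function.support (gradient χ) ⊆ tsupport χ := support_gradient_subset χ
  have hdχ : Continuous (gradient χ) := continuous_gradient (hχs.of_le (by simp))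
  exact exists_isTestOn_avSobolevNorm_sub_le hΩ hne hc hc1 hβ₁ hβ hp₀ hp hχc hχΩ hweak
    (hu.memLp_continuous_smul hχc hχΩ hχs.continuous hχK)
    ((hg.memLp_continuous_smul hχc hχΩ hχs.continuous hχK).add
      (hu.memLp_smul_continuous hχc hχΩ hdχ hdχK))
    ((Function.support_mul_subset_left _ _).trans hχK)
    ((Function.support_add _ _).trans (union_subset
      ((Function.support_smul_subset_left _ _).trans hχK)
      ((Function.support_smul_subset_right u _).trans hdχK))) d s hε

theorem exists_pos_mul_add_self_lt {C ε : ℝ≥0∞} (hC : C ≠ ⊤) (hε : 0 < ε) :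
    ∃ δ > 0, C * (δ + δ) < ε := by
  have hlim : Tendsto (fun δ : ℝ≥0∞ => C * (δ + δ)) (𝓝[>] 0) (𝓝 0) := by
    have hadd : Tendsto (fun δ : ℝ≥0∞ => δ + δ) (𝓝 0) (𝓝 (0 + 0)) := tendsto_id.add tendsto_id
    simpa using (ENNReal.Tendsto.const_mul hadd (Or.inr hC)).mono_left nhdsWithin_le_nhds
  exact (eventually_mem_nhdsWithin.and (hlim.eventually (gt_mem_nhds hε))).exists

theorem statement_15_general (hΩ : IsOpen Ω) (hne : (frontier Ω).Nonempty) (hc : 0 < c)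
    (hc1 : c < 1) (hβ₁ : 1 ≤ β) (hβ : β ≠ ⊤) (hp₀ : p ≠ 0) (hp : p ≠ ⊤)
    (hgrad : HasWeakGradOn u g Ω) (hg : avNorm Ω d c β p s g < ⊤)
    (hu : avNorm Ω d c β p (s + 1) u < ⊤) {ε : ℝ} (hε : 0 < ε) :
    ∃ φ : Euc n → ℝ, ContDiff ℝ (⊤ : ℕ∞) φ ∧ HasCompactSupport φ ∧ tsupport φ ⊆ Ω ∧
      avNorm Ω d c β p s (fun x => g x - gradient φ x) +
        avNorm Ω d c β p (s + 1) (fun x => u x - φ x) < ENNReal.ofReal ε := by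
  have hum : AEStronglyMeasurable u (volume.restrict Ω) := hgrad.1.aestronglyMeasurable
  have hgm : AEStronglyMeasurable g (volume.restrict Ω) := hgrad.2.1.aestronglyMeasurable
  have hfin : avSobolevNorm Ω d c β p s u g < ⊤ := ENNReal.add_lt_top.2 ⟨hg, hu⟩
  obtain ⟨χ, hχ, hχ₀₁, hdχ, hone⟩ := exists_seq_isTestOn_eventually_eq_one hΩ hne hc1
  have hχ₁ : ∀ k, ContDiff ℝ 1 (χ k) := fun k => (hχ k).1.of_le (by simp)
  obtain ⟨δ, hδ, hδε⟩ :=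
    exists_pos_mul_add_self_lt (ENNReal.LpAddConst_lt_top p).ne (ENNReal.ofReal_pos.2 hε)
  obtain ⟨k, hk⟩ := ((tendsto_avSobolevNorm_sub_mul_zero hΩ hne hc1 hβ₁ hβ hp₀ hp hum hgm hfin
    (by norm_num) hχ₁ hχ₀₁ hdχ hone).eventually (ge_mem_nhds hδ)).exists
  obtain ⟨φ, ⟨hφs, hφc, hφΩ⟩, hφ⟩ := hgrad.exists_isTestOn_avSobolevNorm_mul_sub_le hΩ hne hc hc1
    hβ₁ hβ hp₀ hp hfin (hχ k) hδ
  have hχum := (hχ₁ k).continuous.aestronglyMeasurable.mul hum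
  have hχgm := ((hχ₁ k).continuous.aestronglyMeasurable.smul hgm).add
    (hum.smul (continuous_gradient (hχ₁ k)).aestronglyMeasurable)
  have hsum := (avSobolevNorm_add_le hΩ hne hc1 hβ₁ hβ hp₀ hp (hum.sub hχum) (hgm.sub hχgm)
    (hχum.sub hφs.continuous.aestronglyMeasurable)
    (hχgm.sub (continuous_gradient (hφs.of_le (by simp))).aestronglyMeasurable)).trans
    (mul_le_mul_right (add_le_add hk hφ) _)
  simp only [Pi.sub_apply, Pi.mul_apply, Pi.add_apply, Pi.smul_apply', sub_add_sub_cancel] at hsum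
  exact ⟨φ, hφs, hφc, hφΩ, hsum.trans_lt hδε⟩

end Density

/-- density of smooth compactly supported functions in
`W̃^{1,p}_{av,c,β,s}(Ω)` for a weak local John domain with unbounded complement. -/
theorem statement_15 (n : ℕ) (d : ℝ) (hd0 : 0 < d) (hdn : d < n)
    (Ω : Set (Euc n)) (hΩ : IsOpen Ω) (A₀ : ℝ) (hahl : AhlforsRegular d A₀ (frontier Ω))
    (hjohn : WeakLocalJohn Ω d) (hunb : ¬ Bornology.IsBounded Ωᶜ)
    (s p β c : ℝ) (hs : 0 < s) (hp : 1 ≤ p) (hβ : 1 ≤ β) (hc : 0 < c) (hc1 : c < 1)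
    (u : Euc n → ℝ) (g : Euc n → Euc n) (hgrad : HasWeakGradOn u g Ω)
    (hg : avNorm Ω d c (ENNReal.ofReal β) (ENNReal.ofReal p) s g < ⊤)
    (hu : avNorm Ω d c (ENNReal.ofReal β) (ENNReal.ofReal p) (s + 1) u < ⊤) :
    ∀ ε : ℝ, 0 < ε → ∃ φ : Euc n → ℝ,
      ContDiff ℝ (⊤ : ℕ∞) φ ∧ HasCompactSupport φ ∧ tsupport φ ⊆ Ω ∧
      avNorm Ω d c (ENNReal.ofReal β) (ENNReal.ofReal p) s
          (fun x => g x - gradient φ x) +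
        avNorm Ω d c (ENNReal.ofReal β) (ENNReal.ofReal p) (s + 1)
          (fun x => u x - φ x) < ENNReal.ofReal ε := by
  intro ε hε
  exact statement_15_general hΩ hahl.1 hc hc1 (ENNReal.one_le_ofReal.2 hβ) ENNReal.ofReal_ne_top
    (ENNReal.ofReal_pos.2 (by linarith)).ne' ENNReal.ofReal_ne_top hgrad hg hu hε

end Paper
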